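/- arXiv:1803.08386 — 2 statements merged into one kernel-verified Lean document; each statement's English description precedes it below -/
import Mathlib

section
/- Let x be a solution of the system on [t0, ∞) with initial value x0, let σ > 0, let k ≥ 1 be an integer, let (ℓ_ν)_{ν≥k} be a nonincreasing sequence in (0, 1/2] with lim_{ν→∞} ℓ_{ν−1} e^{Kσ(ν+1)} = 0, and let (ξ_ν)_{ν≥k} be a sequence in ℝⁿ with |ξ_ν − x0| ≤ (∏_{i=k}^{ν−1} ℓ_i) |ξ_k − x0| for all ν > k. For each ν ≥ k let x̂_ν be a solution of the system on [t0, ∞) with initial value ξ_ν, and define the hybrid estimate x̂ : [t0 + kσ, ∞) → ℝⁿ by x̂(t) := x̂_ν(t) for t ∈ [t0 + νσ, t0 + (ν+1)σ), ν = k, k+1, …. Then lim_{t→∞} |x̂(t) − x(t)| = 0. -/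
open MeasureTheory Matrix Set Filter Topology

noncomputable section

/-- `x` is a solution of `ẋ = A(t)x + g(t,x)` on `[t0, ∞)` with initial value `ξ`
(integral form, componentwise). -/
def IsSolutionFrom (n : ℕ) (t0 : ℝ) (A : ℝ → Matrix (Fin n) (Fin n) ℝ)
    (g : ℝ → (Fin n → ℝ) → (Fin n → ℝ)) (ξ : Fin n → ℝ) (x : ℝ → (Fin n → ℝ)) : Prop :=
  ContinuousOn x (Set.Ici t0) ∧
    ∀ t ∈ Set.Ici t0, ∀ i : Fin n,
      x t i = ξ i + ∫ s in t0..t, ((A s).mulVec (x s) i + g s (x s) i)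

/-- Regularity of the data on `[t0, ∞)`: `A` measurable with operator norm bound `M`,
`g` measurable in `t`, globally `C0`-Lipschitz in `x`, `g(·,0)` locally bounded. -/
def RegularData (n : ℕ) (t0 M C0 : ℝ) (A : ℝ → Matrix (Fin n) (Fin n) ℝ)
    (g : ℝ → (Fin n → ℝ) → (Fin n → ℝ)) : Prop :=
  (∀ i j, Measurable fun t => A t i j) ∧
  (∀ t ∈ Set.Ici t0, ∀ v : Fin n → ℝ, ‖(A t).mulVec v‖ ≤ M * ‖v‖) ∧
  (∀ v : Fin n → ℝ, ∀ i, Measurable fun t => g t v i) ∧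
  (∀ t ∈ Set.Ici t0, ∀ z1 z2 : Fin n → ℝ, ‖g t z1 - g t z2‖ ≤ C0 * ‖z1 - z2‖) ∧
  (∀ T : ℝ, ∃ B : ℝ, ∀ t ∈ Set.Icc t0 T, ‖g t 0‖ ≤ B)

/-! By Grönwall's inequality two solutions separate at exponential rate at most `K`, so on the
`ν`-th sampling interval the hybrid estimate is off by at most
`‖ξ ν - x0‖ * exp (K * σ * (ν + 1))`. Split the product bounding `‖ξ ν - x0‖` as
`∏ i ∈ Ico k (ν - 1), ℓ i` times `ℓ (ν - 1)`: the latter beats the exponential by assumption, and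
since this already forces `ℓ → 0`, the former stays bounded. -/

open scoped NNReal

lemma hasDerivWithinAt_integral_Ici {E : Type*} [NormedAddCommGroup E] [NormedSpace ℝ E]
    [CompleteSpace E] {d : ℝ → E} {a b u : ℝ} (hd : ContinuousOn d (Icc a b)) (hu : u ∈ Ico a b) :
    HasDerivWithinAt (fun t => ∫ s in a..t, d s) (d u) (Ici u) u := by
  have hsub : Ioc u b ⊆ Icc a b := fun s hs => ⟨hu.1.trans hs.1.le, hs.2⟩
  refine intervalIntegral.integral_hasDerivWithinAt_right (t := Ioi u)
    ((hd.mono (Icc_subset_Icc_right hu.2.le)).intervalIntegrable_of_Icc hu.1) ?_ ?_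
  · rw [← nhdsWithin_Ioc_eq_nhdsGT hu.2]
    exact (hd.mono hsub).stronglyMeasurableAtFilter_nhdsWithin measurableSet_Ioc u
  · rw [ContinuousWithinAt, ← nhdsWithin_Ioc_eq_nhdsGT hu.2]
    exact (hd u (Ico_subset_Icc_self hu)).mono hsub

lemma le_mul_exp_of_le_add_mul_integral {d : ℝ → ℝ} {a b δ K : ℝ} (hK : 0 ≤ K)
    (hd : ContinuousOn d (Icc a b))
    (h : ∀ t ∈ Icc a b, d t ≤ δ + K * ∫ s in a..t, d s) :
    ∀ t ∈ Icc a b, d t ≤ δ * Real.exp (K * (t - a)) := by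
  intro t ht
  have hab : a ≤ b := ht.1.trans ht.2
  let F : ℝ → ℝ := fun u => δ + K * ∫ s in a..u, d s
  have hF_cont : ContinuousOn F (Icc a b) := by
    rw [← uIcc_of_le hab] at hd ⊢
    exact continuousOn_const.add (continuousOn_const.mul
      (intervalIntegral.continuousOn_primitive_interval (hd.integrableOn_compact isCompact_uIcc)))
  have hF_deriv : ∀ u ∈ Ico a b, HasDerivWithinAt F (K * d u) (Ici u) u := fun u hu =>
    ((hasDerivWithinAt_integral_Ici hd hu).const_mul K).const_add δ
  have hF_le := le_gronwallBound_of_liminf_deriv_right_le (δ := δ) (K := K) (ε := 0) hF_cont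
    (fun u hu _ hr => (hF_deriv u hu).liminf_right_slope_le hr) (by simp [F])
    (fun u hu => by
      rw [add_zero]
      exact mul_le_mul_of_nonneg_left (h u (Ico_subset_Icc_self hu)) hK) t ht
  exact (h t ht).trans (gronwallBound_ε0 δ K (t - a) ▸ hF_le)

section Caratheodory

lemma aestronglyMeasurable_comp_of_continuous_of_stronglyMeasurable {α E F : Type*}
    [MeasurableSpace α] {μ : Measure α} {s : Set α}
    [TopologicalSpace E] [TopologicalSpace.MetrizableSpace E] [SecondCountableTopology E]
    [MeasurableSpace E] [OpensMeasurableSpace E]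
    [TopologicalSpace F] [TopologicalSpace.PseudoMetrizableSpace F]
    {f : α → E → F} {x : α → E}
    (hs : MeasurableSet s) (hf_cont : ∀ t ∈ s, Continuous (f t))
    (hf_meas : ∀ z, StronglyMeasurable fun t => f t z) (hx : Measurable (s.domRestrict x)) :
    AEStronglyMeasurable (fun t => f t (x t)) (μ.restrict s) := by
  have hf : StronglyMeasurable (Function.uncurry fun (z : E) (t : s) => f t z) :=
    stronglyMeasurable_uncurry_of_continuous_of_stronglyMeasurable (fun t => hf_cont t t.2)
      fun z => (hf_meas z).comp_measurable measurable_subtype_coe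
  have hfx : StronglyMeasurable fun t : s => f t (x t) :=
    hf.comp_measurable (hx.prodMk measurable_id)
  rw [← map_comap_subtype_coe hs, (MeasurableEmbedding.subtype_coe hs).aestronglyMeasurable_map_iff]
  exact hfx.aestronglyMeasurable

variable {E : Type*} [NormedAddCommGroup E]

lemma intervalIntegrable_comp_of_lipschitzWith [SecondCountableTopology E]
    {F : Type*} [NormedAddCommGroup F] {f : ℝ → E → F} {x : ℝ → E} {a b B : ℝ} {K : ℝ≥0}
    (hab : a ≤ b)
    (hf_lip : ∀ t ∈ Icc a b, LipschitzWith K (f t))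
    (hf_meas : ∀ z, StronglyMeasurable fun t => f t z)
    (hf_zero : ∀ t ∈ Icc a b, ‖f t 0‖ ≤ B) (hx : ContinuousOn x (Icc a b)) :
    IntervalIntegrable (fun t => f t (x t)) volume a b := by
  borelize E
  have hbound : IntervalIntegrable (fun t => K * ‖x t‖ + B) volume a b :=
    ContinuousOn.intervalIntegrable_of_Icc hab (by fun_prop)
  rw [intervalIntegrable_iff_integrableOn_Icc_of_le hab] at hbound ⊢
  refine hbound.mono' (aestronglyMeasurable_comp_of_continuous_of_stronglyMeasurable
    measurableSet_Icc (fun t ht => (hf_lip t ht).continuous) hf_meas hx.domRestrict.measurable) ?_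
  refine (ae_restrict_iff' measurableSet_Icc).2 (ae_of_all _ fun t ht => ?_)
  calc ‖f t (x t)‖ ≤ ‖f t (x t) - f t 0‖ + ‖f t 0‖ := norm_le_norm_sub_add _ _
    _ ≤ K * ‖x t‖ + B :=
      add_le_add (by simpa only [sub_zero] using (hf_lip t ht).norm_sub_le (x t) 0) (hf_zero t ht)

variable [NormedSpace ℝ E]

/-- `x` is a Carathéodory solution on `[t0, ∞)` of `ẋ = f(t, x)` with initial value `ξ`, i.e. a
continuous solution of the integral equation. Integrability of the right-hand side is part of the
definition, since the integral of a non-integrable function is `0` by convention. -/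
structure IsCaratheodorySolution (f : ℝ → E → E) (t0 : ℝ) (ξ : E) (x : ℝ → E) : Prop where
  continuousOn : ContinuousOn x (Ici t0)
  intervalIntegrable : ∀ t ∈ Ici t0, IntervalIntegrable (fun s => f s (x s)) volume t0 t
  eq_add_integral : ∀ t ∈ Ici t0, x t = ξ + ∫ s in t0..t, f s (x s)

namespace IsCaratheodorySolution

variable {f : ℝ → E → E} {t0 t : ℝ} {K : ℝ≥0} {x0 y0 : E} {x y : ℝ → E}

lemma norm_sub_le_add_mul_integral (hf : ∀ t ∈ Ici t0, LipschitzWith K (f t))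
    (hy : IsCaratheodorySolution f t0 y0 y) (hx : IsCaratheodorySolution f t0 x0 x)
    (ht : t ∈ Ici t0) :
    ‖y t - x t‖ ≤ ‖y0 - x0‖ + K * ∫ s in t0..t, ‖y s - x s‖ := by
  have hint : IntervalIntegrable (fun s => K * ‖y s - x s‖) volume t0 t :=
    ((continuousOn_const.mul (hy.continuousOn.sub hx.continuousOn).norm).mono
      Icc_subset_Ici_self).intervalIntegrable_of_Icc ht
  calc ‖y t - x t‖ = ‖(y0 - x0) + ∫ s in t0..t, (f s (y s) - f s (x s))‖ := by
        rw [hy.eq_add_integral t ht, hx.eq_add_integral t ht, add_sub_add_comm,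
          intervalIntegral.integral_sub (hy.intervalIntegrable t ht) (hx.intervalIntegrable t ht)]
    _ ≤ ‖y0 - x0‖ + ‖∫ s in t0..t, (f s (y s) - f s (x s))‖ := norm_add_le _ _
    _ ≤ ‖y0 - x0‖ + ∫ s in t0..t, K * ‖y s - x s‖ := by
        gcongr
        exact intervalIntegral.norm_integral_le_of_norm_le ht
          (ae_of_all _ fun s hs => (hf s hs.1.le).norm_sub_le _ _) hint
    _ = ‖y0 - x0‖ + K * ∫ s in t0..t, ‖y s - x s‖ := by rw [intervalIntegral.integral_const_mul]

lemma norm_sub_le_mul_exp (hf : ∀ t ∈ Ici t0, LipschitzWith K (f t))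
    (hy : IsCaratheodorySolution f t0 y0 y) (hx : IsCaratheodorySolution f t0 x0 x)
    (ht : t ∈ Ici t0) :
    ‖y t - x t‖ ≤ ‖y0 - x0‖ * Real.exp (K * (t - t0)) :=
  le_mul_exp_of_le_add_mul_integral K.coe_nonneg
    ((hy.continuousOn.sub hx.continuousOn).norm.mono Icc_subset_Ici_self)
    (fun _ hs => norm_sub_le_add_mul_integral hf hy hx hs.1) t (right_mem_Icc.2 ht)

lemma tendsto_norm_hybrid_sub (hf : ∀ t ∈ Ici t0, LipschitzWith K (f t))
    (hx : IsCaratheodorySolution f t0 x0 x) {σ : ℝ} (hσ : 0 < σ) {k : ℕ} {ξ : ℕ → E}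
    {xh : ℕ → ℝ → E} (hxh : ∀ ν, k ≤ ν → IsCaratheodorySolution f t0 (ξ ν) (xh ν)) {X : ℝ → E}
    (hX : ∀ ν : ℕ, k ≤ ν → ∀ t ∈ Ico (t0 + ν * σ) (t0 + (ν + 1) * σ), X t = xh ν t)
    (hξ : Tendsto (fun ν : ℕ => ‖ξ ν - x0‖ * Real.exp (K * σ * (ν + 1))) atTop (𝓝 0)) :
    Tendsto (fun t => ‖X t - x t‖) atTop (𝓝 0) := by
  let index : ℝ → ℕ := fun t => ⌊(t - t0) / σ⌋₊
  have hindex : Tendsto index atTop atTop := tendsto_nat_floor_atTop.comp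
    ((tendsto_atTop_add_const_right _ (-t0) tendsto_id).atTop_div_const hσ)
  refine squeeze_zero' (Eventually.of_forall fun t => norm_nonneg _) ?_ (hξ.comp hindex)
  filter_upwards [hindex.eventually_ge_atTop k, eventually_ge_atTop t0] with t hk ht
  have hlower : index t * σ ≤ t - t0 :=
    (le_div_iff₀ hσ).1 (Nat.floor_le (div_nonneg (sub_nonneg.2 ht) hσ.le))
  have hupper : t - t0 < (index t + 1) * σ := (div_lt_iff₀ hσ).1 (Nat.lt_floor_add_one _)
  calc ‖X t - x t‖ = ‖xh (index t) t - x t‖ := by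
        rw [hX (index t) hk t ⟨by linarith, by linarith⟩]
    _ ≤ ‖ξ (index t) - x0‖ * Real.exp (K * (t - t0)) := norm_sub_le_mul_exp hf (hxh _ hk) hx ht
    _ ≤ ‖ξ (index t) - x0‖ * Real.exp (K * σ * (index t + 1)) := by
        rw [mul_assoc (K : ℝ), mul_comm σ]
        gcongr

end IsCaratheodorySolution

end Caratheodory

lemma isBoundedUnder_norm_prod_Ico {R : Type*} [SeminormedCommRing R] {ℓ : ℕ → R} (k : ℕ)
    (hℓ : ∀ᶠ ν in atTop, ‖ℓ ν‖ ≤ 1) :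
    IsBoundedUnder (· ≤ ·) atTop fun ν => ‖∏ i ∈ Finset.Ico k ν, ℓ i‖ := by
  obtain ⟨N, hN⟩ := eventually_atTop.1 hℓ
  refine isBoundedUnder_of_eventually_le (a := ‖∏ i ∈ Finset.Ico k (max k N), ℓ i‖) ?_
  filter_upwards [eventually_ge_atTop (max k N)] with ν hν
  induction ν, hν using Nat.le_induction with
  | base => rfl
  | succ ν hν ih =>
    calc ‖∏ i ∈ Finset.Ico k (ν + 1), ℓ i‖ ≤ ‖∏ i ∈ Finset.Ico k ν, ℓ i‖ * ‖ℓ ν‖ := by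
          rw [Finset.prod_Ico_succ_top (le_of_max_le_left hν)]
          exact norm_mul_le _ _
      _ ≤ ‖∏ i ∈ Finset.Ico k ν, ℓ i‖ :=
          mul_le_of_le_one_right (norm_nonneg _) (hN ν (le_of_max_le_right hν))
      _ ≤ ‖∏ i ∈ Finset.Ico k (max k N), ℓ i‖ := ih

lemma tendsto_prod_Ico_mul_of_one_le_norm {𝕜 : Type*} [NormedField 𝕜] {ℓ b : ℕ → 𝕜} (k : ℕ)
    (hb : ∀ ν, 1 ≤ ‖b ν‖) (h : Tendsto (fun ν => ℓ (ν - 1) * b ν) atTop (𝓝 0)) :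
    Tendsto (fun ν => (∏ i ∈ Finset.Ico k ν, ℓ i) * b ν) atTop (𝓝 0) := by
  have hshift : Tendsto (fun ν => ℓ ν * b (ν + 1)) atTop (𝓝 0) := h.comp (tendsto_add_atTop_nat 1)
  have hℓ : ∀ᶠ ν in atTop, ‖ℓ ν‖ ≤ 1 := by
    filter_upwards [hshift.norm.eventually_le_const (norm_zero.trans_lt one_pos)] with ν hν
    rw [norm_mul] at hν
    exact (le_mul_of_one_le_right (norm_nonneg _) (hb _)).trans hν
  rw [← tendsto_add_atTop_iff_nat 1]
  refine (hshift.zero_mul_isBoundedUnder_le (isBoundedUnder_norm_prod_Ico k hℓ)).congr' ?_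
  filter_upwards [eventually_ge_atTop k] with ν hν
  rw [Finset.prod_Ico_succ_top hν]
  ring

theorem stmt4_general {E : Type*} [NormedAddCommGroup E] [NormedSpace ℝ E] [CompleteSpace E]
    {f : ℝ → E → E} {t0 : ℝ} {K : ℝ≥0} (hf : ∀ t ∈ Ici t0, LipschitzWith K (f t))
    {x : ℝ → E} {x0 : E} (hx : IsCaratheodorySolution f t0 x0 x) {σ : ℝ} (hσ : 0 < σ)
    {k : ℕ} {ℓ : ℕ → ℝ}
    (hℓ : Tendsto (fun ν : ℕ => ℓ (ν - 1) * Real.exp (K * σ * (ν + 1))) atTop (𝓝 0))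
    {ξ : ℕ → E}
    (hξ : ∀ ν, k < ν → ‖ξ ν - x0‖ ≤ (∏ i ∈ Finset.Ico k ν, ℓ i) * ‖ξ k - x0‖)
    {xh : ℕ → ℝ → E} (hxh : ∀ ν, k ≤ ν → IsCaratheodorySolution f t0 (ξ ν) (xh ν))
    {X : ℝ → E}
    (hX : ∀ ν : ℕ, k ≤ ν → ∀ t ∈ Ico (t0 + ν * σ) (t0 + (ν + 1) * σ), X t = xh ν t) :
    Tendsto (fun t => ‖X t - x t‖) atTop (𝓝 0) := by
  have hprod := (tendsto_prod_Ico_mul_of_one_le_norm k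
    (fun ν => (Real.one_le_exp (by positivity)).trans (le_abs_self _)) hℓ).mul_const ‖ξ k - x0‖
  rw [zero_mul] at hprod
  refine hx.tendsto_norm_hybrid_sub hf hσ hxh hX (squeeze_zero' ?_ ?_ hprod)
  · exact Eventually.of_forall fun ν => by positivity
  filter_upwards [eventually_gt_atTop k] with ν hν
  exact (mul_le_mul_of_nonneg_right (hξ ν hν) (Real.exp_nonneg _)).trans_eq
    (mul_right_comm _ _ _)

section RegularData

variable {n : ℕ} {t0 M C0 : ℝ} {A : ℝ → Matrix (Fin n) (Fin n) ℝ}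
  {g : ℝ → (Fin n → ℝ) → (Fin n → ℝ)} {ξ : Fin n → ℝ} {x : ℝ → (Fin n → ℝ)}

lemma RegularData.lipschitzWith (hreg : RegularData n t0 M C0 A g) :
    ∀ t ∈ Ici t0, LipschitzWith (M + C0).toNNReal fun z => A t *ᵥ z + g t z := by
  obtain ⟨-, hA, -, hg, -⟩ := hreg
  intro t ht
  refine LipschitzWith.of_dist_le' fun y z => ?_
  calc dist (A t *ᵥ y + g t y) (A t *ᵥ z + g t z)
      = ‖A t *ᵥ (y - z) + (g t y - g t z)‖ := by
        rw [dist_eq_norm, add_sub_add_comm, Matrix.mulVec_sub]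
    _ ≤ ‖A t *ᵥ (y - z)‖ + ‖g t y - g t z‖ := norm_add_le _ _
    _ ≤ M * ‖y - z‖ + C0 * ‖y - z‖ := add_le_add (hA t ht _) (hg t ht y z)
    _ = (M + C0) * dist y z := by rw [dist_eq_norm, add_mul]

lemma RegularData.stronglyMeasurable (hreg : RegularData n t0 M C0 A g) (z : Fin n → ℝ) :
    StronglyMeasurable fun t => A t *ᵥ z + g t z := by
  obtain ⟨hA, -, hg, -, -⟩ := hreg
  refine (measurable_pi_lambda _ fun i => Measurable.add ?_ (hg z i)).stronglyMeasurable
  exact Finset.measurable_sum Finset.univ fun j _ => (hA i j).mul_const (z j)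

lemma RegularData.intervalIntegrable (hreg : RegularData n t0 M C0 A g)
    (hx : ContinuousOn x (Ici t0)) {t : ℝ} (ht : t ∈ Ici t0) :
    IntervalIntegrable (fun s => A s *ᵥ x s + g s (x s)) volume t0 t := by
  have ⟨_, _, _, _, hg_zero⟩ := hreg
  obtain ⟨B, hB⟩ := hg_zero t
  exact intervalIntegrable_comp_of_lipschitzWith (f := fun s z => A s *ᵥ z + g s z) ht
    (fun s hs => hreg.lipschitzWith s hs.1) hreg.stronglyMeasurable
    (fun s hs => by simpa using hB s hs) (hx.mono Icc_subset_Ici_self)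

lemma IsSolutionFrom.isCaratheodorySolution (hx : IsSolutionFrom n t0 A g ξ x)
    (hreg : RegularData n t0 M C0 A g) :
    IsCaratheodorySolution (fun t z => A t *ᵥ z + g t z) t0 ξ x where
  continuousOn := hx.1
  intervalIntegrable _ ht := hreg.intervalIntegrable hx.1 ht
  eq_add_integral t ht := by
    ext i
    rw [hx.2 t ht i, Pi.add_apply]
    exact congrArg (ξ i + ·) ((ContinuousLinearMap.proj (R := ℝ) i).intervalIntegral_comp_comm
      (hreg.intervalIntegrable hx.1 ht))

end RegularData

theorem stmt4 (n : ℕ) (hn : 1 ≤ n) (t0 : ℝ)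
    (M C0 : ℝ) (hM : 0 < M) (hC0 : 0 < C0) (K : ℝ) (hK : K = M + C0)
    (A : ℝ → Matrix (Fin n) (Fin n) ℝ) (g : ℝ → (Fin n → ℝ) → (Fin n → ℝ))
    (hreg : RegularData n t0 M C0 A g)
    (x : ℝ → (Fin n → ℝ)) (x0 : Fin n → ℝ) (hx : IsSolutionFrom n t0 A g x0 x)
    (σ : ℝ) (hσ : 0 < σ)
    (k : ℕ) (hk : 1 ≤ k)
    (ℓ : ℕ → ℝ)
    (hℓ_mem : ∀ ν : ℕ, k ≤ ν → ℓ ν ∈ Set.Ioc (0:ℝ) (1/2))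
    (hℓ_dec : ∀ ν : ℕ, k ≤ ν → ℓ (ν + 1) ≤ ℓ ν)
    (hℓ_lim : Filter.Tendsto (fun ν : ℕ => ℓ (ν - 1) * Real.exp (K * σ * (ν + 1)))
      Filter.atTop (nhds 0))
    (ξ : ℕ → (Fin n → ℝ))
    (hξ : ∀ ν : ℕ, k < ν →
      ‖ξ ν - x0‖ ≤ (∏ i ∈ Finset.Ico k ν, ℓ i) * ‖ξ k - x0‖)
    (xh : ℕ → ℝ → (Fin n → ℝ))
    (hxh : ∀ ν : ℕ, k ≤ ν → IsSolutionFrom n t0 A g (ξ ν) (xh ν))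
    (X : ℝ → (Fin n → ℝ))
    (hX : ∀ ν : ℕ, k ≤ ν → ∀ t ∈ Set.Ico (t0 + ν * σ) (t0 + (ν + 1) * σ),
      X t = xh ν t) :
    Filter.Tendsto (fun t => ‖X t - x t‖) Filter.atTop (nhds 0) := by
  obtain rfl : ((M + C0).toNNReal : ℝ) = K := by rw [Real.coe_toNNReal _ (by positivity), hK]
  exact stmt4_general hreg.lipschitzWith (hx.isCaratheodorySolution hreg) hσ hℓ_lim hξ
    (fun ν hν => (hxh ν hν).isCaratheodorySolution hreg) hX
end
end

section
/- Assume lim_{s→t0⁺} a_l(s) = α_l with α_l ≠ 0 for every l = 2, …, n, and that for every ρ > 0 there is L_ρ with |f_n(t, z1) − f_n(t, z2)| ≤ L_ρ |z1 − z2| for all t ∈ [t0,τ] and |z1|, |z2| ≤ ρ. Then for every ℓ ∈ (0, 1), every R > 0 and every θ > 0 there exists τ' ∈ (t0, min(t0 + θ, τ)] such that Ψ(t) is invertible for all t ∈ (t0, τ'] and sup_{t ∈ (t0, τ']} |Ψ(t)⁻¹ (Ξ(t; d1) − Ξ(t; d2))| ≤ ℓ · sup_{s ∈ [t0, τ']}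 |d1(s) − d2(s)| for all continuous d1, d2 : [t0, τ'] → ℝⁿ with sup norms at most R. -/
open MeasureTheory Matrix Set Filter Topology

noncomputable section

/-- `x` is a solution of `ẋ = A(t)x + g(t,x)` on `[t0, τ]` (integral form, componentwise). -/
def IsSolution (n : ℕ) (t0 τ : ℝ) (A : ℝ → Matrix (Fin n) (Fin n) ℝ)
    (g : ℝ → (Fin n → ℝ) → (Fin n → ℝ)) (x : ℝ → (Fin n → ℝ)) : Prop :=
  ContinuousOn x (Set.Icc t0 τ) ∧
    ∀ t ∈ Set.Icc t0 τ, ∀ i : Fin n,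
      x t i = x t0 i + ∫ s in t0..t, ((A s).mulVec (x s) i + g s (x s) i)

/-- `Φ` is the fundamental matrix of `ẋ = A(t)x` on `[t0, τ]`. -/
def IsFundamental (n : ℕ) (t0 τ : ℝ) (A : ℝ → Matrix (Fin n) (Fin n) ℝ)
    (Φ : ℝ → Matrix (Fin n) (Fin n) ℝ) : Prop :=
  (∀ i j : Fin n, ContinuousOn (fun t => Φ t i j) (Set.Icc t0 τ)) ∧
    ∀ t ∈ Set.Icc t0 τ, ∀ i j : Fin n,
      Φ t i j = (1 : Matrix (Fin n) (Fin n) ℝ) i j + ∫ s in t0..t, (A s * Φ s) i j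

/-- `Ψ(t) = ∫_{t0}^t Φ(s)ᵀ C(s)ᵀ C(s) Φ(s) ds` (entrywise integral). -/
def Psi (n k0 : ℕ) (t0 : ℝ) (C : ℝ → Matrix (Fin k0) (Fin n) ℝ)
    (Φ : ℝ → Matrix (Fin n) (Fin n) ℝ) (t : ℝ) : Matrix (Fin n) (Fin n) ℝ :=
  fun i j => ∫ s in t0..t, ((Φ s)ᵀ * (C s)ᵀ * C s * Φ s) i j

/-- `Ξ(t; z) = ∫_{t0}^t Φ(ρ)ᵀ C(ρ)ᵀ C(ρ) Φ(ρ) (∫_{t0}^ρ Φ(s)⁻¹ g(s, z(s)) ds) dρ`. -/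
def Xi (n k0 : ℕ) (t0 : ℝ) (C : ℝ → Matrix (Fin k0) (Fin n) ℝ)
    (Φ : ℝ → Matrix (Fin n) (Fin n) ℝ) (g : ℝ → (Fin n → ℝ) → (Fin n → ℝ))
    (z : ℝ → (Fin n → ℝ)) (t : ℝ) : Fin n → ℝ :=
  fun i => ∫ ρ in t0..t,
    ((Φ ρ)ᵀ * (C ρ)ᵀ * C ρ * Φ ρ).mulVec
      (fun i' => ∫ s in t0..ρ, ((Φ s)⁻¹).mulVec (g s (z s)) i') i

/-- The map `F_T(t; z)`. -/
def Fmap (n k0 : ℕ) (t0 : ℝ) (C : ℝ → Matrix (Fin k0) (Fin n) ℝ)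
    (Φ : ℝ → Matrix (Fin n) (Fin n) ℝ) (g : ℝ → (Fin n → ℝ) → (Fin n → ℝ))
    (y : ℝ → (Fin k0 → ℝ)) (T : ℝ) (z : ℝ → (Fin n → ℝ)) (t : ℝ) : Fin n → ℝ :=
  (Φ t).mulVec
      ((Psi n k0 t0 C Φ T)⁻¹.mulVec
        ((fun i => ∫ ρ in t0..T, ((Φ ρ)ᵀ * (C ρ)ᵀ).mulVec (y ρ) i)
          - Xi n k0 t0 C Φ g z T))
    + (Φ t).mulVec (fun i => ∫ ρ in t0..t, ((Φ ρ)⁻¹).mulVec (g ρ (z ρ)) i)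

/-- supremum norm of `f` over `[a, b]`. -/
def supN (n : ℕ) (a b : ℝ) (f : ℝ → (Fin n → ℝ)) : ℝ :=
  ⨆ t : Set.Icc a b, ‖f (t : ℝ)‖

/-- The triangular system matrix: `A(t)_{i,i+1} = a_{i+1}(t)` (1-based), zero elsewhere. -/
def triA (n : ℕ) (a : ℕ → ℝ → ℝ) (t : ℝ) : Matrix (Fin n) (Fin n) ℝ :=
  Matrix.of fun i j => if (j : ℕ) = (i : ℕ) + 1 then a ((i : ℕ) + 2) t else 0

/-- The output row vector `C = (1, 0, …, 0)`. -/
def triC (n : ℕ) : Matrix (Fin 1) (Fin n) ℝ :=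
  Matrix.of fun _ j => if (j : ℕ) = 0 then 1 else 0

/-- The triangular vector field `g(t,x) = (f_1(t), …, f_{n-1}(t), f_n(t,x))ᵀ`. -/
def triG (n : ℕ) (f : ℕ → ℝ → ℝ) (fn : ℝ → (Fin n → ℝ) → ℝ)
    (t : ℝ) (x : Fin n → ℝ) : Fin n → ℝ :=
  fun i => if (i : ℕ) = n - 1 then fn t x else f ((i : ℕ) + 1) t

/-- Regularity of the triangular data: `a_l`, `f_l` measurable and bounded on `[t0,τ]`,
`f_n` measurable in `t` and continuous in `x`. -/
def TriRegular (n : ℕ) (t0 τ : ℝ) (a f : ℕ → ℝ → ℝ)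
    (fn : ℝ → (Fin n → ℝ) → ℝ) : Prop :=
  (∀ l, 2 ≤ l → l ≤ n → Measurable (a l)) ∧
  (∀ l, 2 ≤ l → l ≤ n → ∃ M : ℝ, ∀ t ∈ Set.Icc t0 τ, |a l t| ≤ M) ∧
  (∀ l, 1 ≤ l → l ≤ n - 1 → Measurable (f l)) ∧
  (∀ l, 1 ≤ l → l ≤ n - 1 → ∃ M : ℝ, ∀ t ∈ Set.Icc t0 τ, |f l t| ≤ M) ∧
  (∀ v : Fin n → ℝ, Measurable fun t => fn t v) ∧
  (∀ t ∈ Set.Icc t0 τ, Continuous (fn t))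

/-!
Write `δ = t - t0`. Conjugation by the dilation `diag(δ ^ i)` turns the fundamental matrix into a
matrix with an invertible limit: `Φ i j ~ L i j * δ ^ (j - i)` for `i ≤ j`, where the entries of the
first row of `L` are nonzero because the `α l` are. Only that row enters `Ψ`, so `Ψ i j` is
asymptotic to `L 0 i * L 0 j * δ ^ (i + j + 1) / (i + j + 1)`: after rescaling, `Ψ` tends to a
diagonal congruence of the Hilbert matrix, which is positive definite. Hence `Ψ` is invertible for
small `δ`, and `Ψ⁻¹ i j = O(δ ^ (-(i + j + 1)))`.

The differences `g(s, d₁) - g(s, d₂)` live in the last coordinate, where the last column of `Φ⁻¹`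
damps component `j` by `δ ^ (n - 1 - j)`. Integrating twice, component `j` of `Ξ(d₁) - Ξ(d₂)` is
`O(δ ^ (n + j + 1))` times the supremum of `|d₁ - d₂|`, so `Ψ⁻¹ (Ξ(d₁) - Ξ(d₂))` is `O(δ)` times
that supremum, and a short enough interval brings the constant below `ℓ`.
-/

section Integrals

theorem eventually_forall_Ioc {α : Type*} [LinearOrder α] [TopologicalSpace α] [OrderTopology α]
    [NoMaxOrder α] [DenselyOrdered α] {a : α} {P : α → Prop} (h : ∀ᶠ s in 𝓝[>] a, P s) :
    ∀ᶠ t in 𝓝[>] a, ∀ s ∈ Ioc a t, P s := by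
  obtain ⟨u, hu, hPu⟩ := mem_nhdsGT_iff_exists_Ioc_subset.1 h
  filter_upwards [Ioc_mem_nhdsGT hu] with t ht s hs using hPu ⟨hs.1, hs.2.trans ht.2⟩

theorem eventually_sub_pos (a : ℝ) : ∀ᶠ t in 𝓝[>] a, 0 < t - a := by
  filter_upwards [self_mem_nhdsWithin] with t ht using sub_pos.2 ht

variable {E : Type*} [NormedAddCommGroup E] [NormedSpace ℝ E] {a b : ℝ}

theorem isLittleO_integral_nhdsGT {f : ℝ → E} {g : ℝ → ℝ} (hfg : f =o[𝓝[>] a] g)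
    (hg : ∀ᶠ t in 𝓝[>] a, IntervalIntegrable g volume a t) (hg0 : ∀ᶠ t in 𝓝[>] a, 0 ≤ g t) :
    (fun t => ∫ s in a..t, f s) =o[𝓝[>] a] fun t => ∫ s in a..t, g s := by
  refine Asymptotics.isLittleO_iff.2 fun ε hε => ?_
  filter_upwards [eventually_forall_Ioc ((hfg.def hε).and hg0), hg, self_mem_nhdsWithin]
    with t hfgt hgt (hat : a < t)
  calc ‖∫ s in a..t, f s‖ ≤ ∫ s in a..t, ε * g s := by
        refine intervalIntegral.norm_integral_le_of_norm_le hat.le ?_ (hgt.const_mul ε)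
        refine Eventually.of_forall fun s hs => ?_
        obtain ⟨hle, hnonneg⟩ := hfgt s hs
        rwa [Real.norm_of_nonneg hnonneg] at hle
    _ ≤ ε * ‖∫ s in a..t, g s‖ := by
        rw [intervalIntegral.integral_const_mul]
        exact mul_le_mul_of_nonneg_left (Real.le_norm_self _) hε.le

theorem integral_sub_const_pow (k : ℕ) (t : ℝ) :
    ∫ s in a..t, (s - a) ^ k = (t - a) ^ (k + 1) / (k + 1) := by
  rw [intervalIntegral.integral_comp_sub_right (fun s => s ^ k), integral_pow]
  simp

theorem tendsto_integral_div_pow {h : ℝ → ℝ} {k : ℕ} {c : ℝ}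
    (hm : StronglyMeasurableAtFilter h (𝓝[>] a))
    (hlim : Tendsto (fun s => h s / (s - a) ^ k) (𝓝[>] a) (𝓝 c)) :
    Tendsto (fun t => (∫ s in a..t, h s) / (t - a) ^ (k + 1)) (𝓝[>] a) (𝓝 (c / (k + 1))) := by
  have hpos := eventually_sub_pos a
  have hpow_int (t : ℝ) : IntervalIntegrable (fun s => (s - a) ^ k) volume a t :=
    Continuous.intervalIntegrable (by fun_prop) a t
  have hh_tendsto : Tendsto h (𝓝[>] a) (𝓝 (c * (a - a) ^ k)) := by
    have hpow : Tendsto (fun s => (s - a) ^ k) (𝓝[>] a) (𝓝 ((a - a) ^ k)) :=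
      Continuous.continuousWithinAt (by fun_prop)
    refine (hlim.mul hpow).congr' ?_
    filter_upwards [hpos] with s hs using div_mul_cancel₀ _ (pow_pos hs k).ne'
  have hh_int : ∀ᶠ t in 𝓝[>] a, IntervalIntegrable h volume a t :=
    hh_tendsto.eventually_intervalIntegrable (l := 𝓝[≥] a) hm (Measure.finiteAt_nhdsWithin _ _ _)
      (tendsto_const_pure.mono_right (pure_le_nhdsWithin self_mem_Ici))
      (tendsto_id'.2 (nhdsWithin_mono a Ioi_subset_Ici_self))
  have hlittleO : (fun s => h s - c * (s - a) ^ k) =o[𝓝[>] a] fun s => (s - a) ^ k := by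
    refine (Asymptotics.isLittleO_iff_tendsto' ?_).2 ?_
    · filter_upwards [hpos] with s hs h0 using absurd h0 (pow_pos hs k).ne'
    · refine (tendsto_sub_nhds_zero_iff.2 hlim).congr' ?_
      filter_upwards [hpos] with s hs
      rw [sub_div, mul_div_cancel_right₀ _ (pow_pos hs k).ne']
  have hquot := (isLittleO_integral_nhdsGT hlittleO (Eventually.of_forall hpow_int)
    (hpos.mono fun s hs => (pow_pos hs k).le)).tendsto_div_nhds_zero
  have hsum := (hquot.add_const c).div_const ((k : ℝ) + 1)
  rw [zero_add] at hsum
  refine hsum.congr' ?_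
  filter_upwards [hh_int, hpos] with t ht hδ
  rw [intervalIntegral.integral_sub ht ((hpow_int t).const_mul c),
    intervalIntegral.integral_const_mul, integral_sub_const_pow]
  field_simp
  ring

-- If `f` is not integrable then neither is `g`, and both integrals are `0` by convention.
theorem norm_integral_sub_integral_le {f g : ℝ → E}
    (hfg : IntervalIntegrable (fun s => f s - g s) volume a b) :
    ‖(∫ s in a..b, f s) - ∫ s in a..b, g s‖ ≤ ‖∫ s in a..b, (f s - g s)‖ := by
  by_cases hf : IntervalIntegrable f volume a b
  · have hg : IntervalIntegrable g volume a b := by simpa using hf.sub hfg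
    rw [intervalIntegral.integral_sub hf hg]
  · have hg : ¬ IntervalIntegrable g volume a b := fun hg => hf (by simpa using hfg.add hg)
    rw [intervalIntegral.integral_undef hf, intervalIntegral.integral_undef hg, sub_zero, norm_zero]
    exact norm_nonneg _

theorem norm_integral_sub_integral_le_of_norm_le_const {f g : ℝ → E} {B : ℝ} (hab : a ≤ b)
    (hf : AEStronglyMeasurable f (volume.restrict (Ioc a b)))
    (hg : AEStronglyMeasurable g (volume.restrict (Ioc a b)))
    (hB : ∀ s ∈ Ioc a b, ‖f s - g s‖ ≤ B) :
    ‖(∫ s in a..b, f s) - ∫ s in a..b, g s‖ ≤ B * (b - a) := by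
  have hfg : IntervalIntegrable (fun s => f s - g s) volume a b := by
    rw [intervalIntegrable_iff_integrableOn_Ioc_of_le hab]
    exact IntegrableOn.of_bound measure_Ioc_lt_top (hf.sub hg) B
      ((ae_restrict_iff' measurableSet_Ioc).2 (Eventually.of_forall hB))
  calc _ ≤ ‖∫ s in a..b, (f s - g s)‖ := norm_integral_sub_integral_le hfg
    _ ≤ B * |b - a| :=
        intervalIntegral.norm_integral_le_of_norm_le_const (by rwa [uIoc_of_le hab])
    _ = B * (b - a) := by rw [abs_of_nonneg (sub_nonneg.2 hab)]

theorem aestronglyMeasurable_primitive {f : ℝ → E}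
    (hf : AEStronglyMeasurable f (volume.restrict (Ioc a b))) :
    AEStronglyMeasurable (fun t => ∫ s in a..t, f s) (volume.restrict (Ioc a b)) := by
  obtain ⟨f', hf', hff'⟩ := hf
  have hS : MeasurableSet {p : ℝ × ℝ | p.2 ∈ Ioc a p.1} :=
    (measurableSet_lt measurable_const measurable_snd).inter
      (measurableSet_le measurable_snd measurable_fst)
  have hF : StronglyMeasurable
      ({p : ℝ × ℝ | p.2 ∈ Ioc a p.1}.indicator fun p => f' p.2) :=
    (hf'.comp_measurable measurable_snd).indicator hS
  refine ⟨_, hF.integral_prod_right' (ν := volume), ?_⟩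
  refine (ae_restrict_iff' measurableSet_Ioc).2 (Eventually.of_forall fun t ht => ?_)
  calc ∫ s in a..t, f s = ∫ s in Ioc a t, f s := intervalIntegral.integral_of_le ht.1.le
    _ = ∫ s in Ioc a t, f' s := integral_congr_ae
        (ae_mono (Measure.restrict_mono (Ioc_subset_Ioc_right ht.2) le_rfl) hff')
    _ = ∫ s, (Ioc a t).indicator f' s := (integral_indicator measurableSet_Ioc).symm

theorem aestronglyMeasurable_comp_of_caratheodory {Ω X F : Type*} [MeasurableSpace Ω]
    {μ : Measure Ω} {s : Set Ω} [TopologicalSpace X] [TopologicalSpace.MetrizableSpace X]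
    [SecondCountableTopology X] [MeasurableSpace X] [OpensMeasurableSpace X]
    [NormedAddCommGroup F] [MeasurableSpace F] [BorelSpace F] [SecondCountableTopology F]
    {u : Ω → X → F} {d : Ω → X} (hs : MeasurableSet s) (hum : ∀ x, Measurable fun t => u t x)
    (huc : ∀ t ∈ s, Continuous (u t)) (hd : AEMeasurable d (μ.restrict s)) :
    AEStronglyMeasurable (fun t => u t (d t)) (μ.restrict s) := by
  have huncurry : Measurable (Function.uncurry fun x => s.indicator fun t => u t x) := by
    refine measurable_uncurry_of_continuous_of_measurable (fun t => ?_)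
      (fun x => (hum x).indicator hs)
    by_cases ht : t ∈ s
    · simpa only [indicator_of_mem ht] using huc t ht
    · simpa only [indicator_of_notMem ht] using continuous_const
  refine ⟨_, (huncurry.comp (hd.measurable_mk.prodMk measurable_id)).stronglyMeasurable, ?_⟩
  filter_upwards [hd.ae_eq_mk, ae_restrict_mem hs] with t hdt hts
  simp only [Function.comp_apply, Function.uncurry_apply_pair, id_eq, indicator_of_mem hts, hdt]

end Integrals

section Rescaling

variable {ι 𝕜 : Type*} [Fintype ι] [DecidableEq ι]

/-- The matrix `M` with row `i` multiplied by `u i` and column `j` by `v j`. Graded growth of a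
matrix function is expressed by rescaling with powers of the distance to the initial time. -/
def rescale [CommRing 𝕜] (u v : ι → 𝕜) (M : Matrix ι ι 𝕜) : Matrix ι ι 𝕜 :=
  diagonal u * M * diagonal v

theorem rescale_apply [CommRing 𝕜] (u v : ι → 𝕜) (M : Matrix ι ι 𝕜) (i j : ι) :
    rescale u v M i j = u i * M i j * v j := by
  rw [rescale, mul_diagonal, diagonal_mul]

theorem isUnit_diagonal_of_forall_ne_zero [Field 𝕜] {u : ι → 𝕜} (hu : ∀ i, u i ≠ 0) :
    IsUnit (diagonal u) :=
  isUnit_diagonal.2 (Pi.isUnit_iff.2 fun i => (hu i).isUnit)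

theorem isUnit_rescale_iff [Field 𝕜] {u v : ι → 𝕜} (hu : ∀ i, u i ≠ 0) (hv : ∀ i, v i ≠ 0)
    {M : Matrix ι ι 𝕜} : IsUnit (rescale u v M) ↔ IsUnit M := by
  rw [rescale, IsUnit.mul_right_iff (isUnit_diagonal_of_forall_ne_zero hv),
    IsUnit.mul_left_iff (isUnit_diagonal_of_forall_ne_zero hu)]

theorem inv_diagonal_of_forall_ne_zero [Field 𝕜] {u : ι → 𝕜} (hu : ∀ i, u i ≠ 0) :
    (diagonal u)⁻¹ = diagonal u⁻¹ := by
  refine inv_eq_right_inv ?_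
  rw [diagonal_mul_diagonal, ← diagonal_one]
  exact congrArg diagonal (funext fun i => mul_inv_cancel₀ (hu i))

theorem inv_rescale [Field 𝕜] {u v : ι → 𝕜} (hu : ∀ i, u i ≠ 0) (hv : ∀ i, v i ≠ 0)
    (M : Matrix ι ι 𝕜) : (rescale u v M)⁻¹ = rescale v⁻¹ u⁻¹ M⁻¹ := by
  rw [rescale, rescale, Matrix.mul_inv_rev, Matrix.mul_inv_rev,
    inv_diagonal_of_forall_ne_zero hu, inv_diagonal_of_forall_ne_zero hv, Matrix.mul_assoc]

variable {X : Type*} [NormedField 𝕜] {l : Filter X} {u v : X → ι → 𝕜} {M : X → Matrix ι ι 𝕜}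
  {L : Matrix ι ι 𝕜}

theorem eventually_isUnit_of_tendsto_rescale (hu : ∀ᶠ x in l, ∀ i, u x i ≠ 0)
    (hv : ∀ᶠ x in l, ∀ i, v x i ≠ 0)
    (hM : Tendsto (fun x => rescale (u x) (v x) (M x)) l (𝓝 L)) (hL : IsUnit L) :
    ∀ᶠ x in l, IsUnit (M x) := by
  have hdet : Tendsto (fun x => (rescale (u x) (v x) (M x)).det) l (𝓝 L.det) :=
    (continuous_id.matrix_det.tendsto L).comp hM
  have hL0 : L.det ≠ 0 := ((isUnit_iff_isUnit_det L).1 hL).ne_zero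
  filter_upwards [hdet.eventually_ne hL0, hu, hv] with x hx hux hvx
  exact (isUnit_rescale_iff hux hvx).1 ((isUnit_iff_isUnit_det _).2 hx.isUnit)

theorem tendsto_rescale_inv (hu : ∀ᶠ x in l, ∀ i, u x i ≠ 0) (hv : ∀ᶠ x in l, ∀ i, v x i ≠ 0)
    (hM : Tendsto (fun x => rescale (u x) (v x) (M x)) l (𝓝 L)) (hL : IsUnit L) :
    Tendsto (fun x => rescale (v x)⁻¹ (u x)⁻¹ (M x)⁻¹) l (𝓝 L⁻¹) := by
  have hinv : ContinuousAt (Inv.inv : Matrix ι ι 𝕜 → Matrix ι ι 𝕜) L := by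
    have hL0 : L.det ≠ 0 := ((isUnit_iff_isUnit_det L).1 hL).ne_zero
    refine continuousAt_matrix_inv L ?_
    rw [Ring.inverse_eq_inv']
    exact continuousAt_inv₀ hL0
  refine (hinv.tendsto.comp hM).congr' ?_
  filter_upwards [hu, hv] with x hux hvx using inv_rescale hux hvx (M x)

theorem exists_eventually_forall_norm_le {κ E : Type*} [Finite κ] [SeminormedAddCommGroup E]
    {f : X → κ → E} {c : κ → E} (hf : Tendsto f l (𝓝 c)) :
    ∃ K, 0 ≤ K ∧ ∀ᶠ x in l, ∀ i, ‖f x i‖ ≤ K := by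
  cases nonempty_fintype κ
  refine ⟨‖c‖ + 1, by positivity, ?_⟩
  filter_upwards [hf.norm.eventually_le_const (lt_add_one ‖c‖)] with x hx i
  exact (norm_le_pi_norm (f x) i).trans hx

theorem exists_eventually_norm_rescale_le
    (hM : Tendsto (fun x => rescale (u x) (v x) (M x)) l (𝓝 L)) :
    ∃ K, 0 ≤ K ∧ ∀ᶠ x in l, ∀ i j, ‖u x i * M x i j * v x j‖ ≤ K := by
  have hpair : Tendsto (fun x (p : ι × ι) => rescale (u x) (v x) (M x) p.1 p.2) l
      (𝓝 fun p => L p.1 p.2) :=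
    tendsto_pi_nhds.2 fun p => tendsto_pi_nhds.1 (tendsto_pi_nhds.1 hM p.1) p.2
  obtain ⟨K, hK, hbound⟩ := exists_eventually_forall_norm_le hpair
  refine ⟨K, hK, hbound.mono fun x hx i j => ?_⟩
  simpa only [rescale_apply] using hx (i, j)

end Rescaling

section HilbertMatrix

/-- The `n × n` Hilbert matrix: the Gram matrix of the monomials `1, r, …, r ^ (n - 1)` on the unit
interval. -/
def hilbertMatrix (n : ℕ) : Matrix (Fin n) (Fin n) ℝ :=
  of fun i j => 1 / ((i : ℝ) + j + 1)

theorem dotProduct_hilbertMatrix_mulVec {n : ℕ} (y : Fin n → ℝ) :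
    y ⬝ᵥ hilbertMatrix n *ᵥ y = ∫ r in (0 : ℝ)..1, (∑ i, y i * r ^ (i : ℕ)) ^ 2 := by
  have hsq (r : ℝ) : (∑ i, y i * r ^ (i : ℕ)) ^ 2 =
      ∑ i, ∑ j, y i * y j * r ^ ((i : ℕ) + j) := by
    rw [sq, Finset.sum_mul_sum]
    refine Finset.sum_congr rfl fun i _ => Finset.sum_congr rfl fun j _ => ?_
    ring
  simp only [hsq]
  rw [intervalIntegral.integral_finsetSum fun i _ =>
    Continuous.intervalIntegrable (by fun_prop) _ _]
  refine Finset.sum_congr rfl fun i _ => ?_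
  rw [intervalIntegral.integral_finsetSum fun j _ =>
    Continuous.intervalIntegrable (by fun_prop) _ _, mulVec, dotProduct, Finset.mul_sum]
  refine Finset.sum_congr rfl fun j _ => ?_
  rw [intervalIntegral.integral_const_mul, integral_pow, hilbertMatrix, of_apply]
  simp only [one_pow, ne_eq, Nat.add_eq_zero_iff, one_ne_zero, and_false, not_false_eq_true,
    zero_pow, sub_zero, Nat.cast_add]
  ring

theorem posDef_hilbertMatrix (n : ℕ) : (hilbertMatrix n).PosDef := by
  refine .of_dotProduct_mulVec_pos ?_ fun y hy => ?_
  · ext i j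
    simp [hilbertMatrix, add_comm]
  · rw [star_trivial, dotProduct_hilbertMatrix_mulVec]
    obtain ⟨r, hr, hne⟩ : ∃ r ∈ Icc (0 : ℝ) 1, ∑ i, y i * r ^ (i : ℕ) ≠ 0 := by
      by_contra! hzero
      let node : ℕ ↪ Icc (0 : ℝ) 1 := (Icc_infinite zero_lt_one).natEmbedding _
      have hnode : Function.Injective fun j : Fin n => (node j : ℝ) :=
        Subtype.val_injective.comp (node.injective.comp Fin.val_injective)
      exact hy (eq_zero_of_forall_index_sum_mul_pow_eq_zero hnode fun j => hzero _ (node j).2)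
    exact intervalIntegral.integral_pos zero_lt_one (by fun_prop) (fun _ _ => sq_nonneg _)
      ⟨r, hr, by positivity⟩

theorem isUnit_hilbertMatrix (n : ℕ) : IsUnit (hilbertMatrix n) :=
  (posDef_hilbertMatrix n).isUnit

end HilbertMatrix

section Measurability

theorem stronglyMeasurableAtFilter_mul {α R : Type*} [MeasurableSpace α] [TopologicalSpace R]
    [Mul R] [ContinuousMul R] {μ : Measure α} {l : Filter α} {f g : α → R}
    (hf : StronglyMeasurableAtFilter f l μ) (hg : StronglyMeasurableAtFilter g l μ) :
    StronglyMeasurableAtFilter (fun x => f x * g x) l μ := by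
  obtain ⟨s, hs, hfs⟩ := hf
  obtain ⟨t, ht, hgt⟩ := hg
  exact ⟨s ∩ t, inter_mem hs ht,
    (hfs.mono_set inter_subset_left).mul (hgt.mono_set inter_subset_right)⟩

variable {α ι : Type*} [MeasurableSpace α] [Fintype ι] {μ : Measure α} {M : α → Matrix ι ι ℝ}

theorem aestronglyMeasurable_mulVec {v : α → ι → ℝ}
    (hM : ∀ i j, AEStronglyMeasurable (fun x => M x i j) μ)
    (hv : ∀ i, AEStronglyMeasurable (fun x => v x i) μ) (i : ι) :
    AEStronglyMeasurable (fun x => (M x *ᵥ v x) i) μ :=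
  Finset.aestronglyMeasurable_fun_sum _ fun j _ => (hM i j).mul (hv j)

variable [DecidableEq ι]

theorem aestronglyMeasurable_det (hM : ∀ i j, AEStronglyMeasurable (fun x => M x i j) μ) :
    AEStronglyMeasurable (fun x => (M x).det) μ := by
  simp only [det_apply']
  exact Finset.aestronglyMeasurable_fun_sum _ fun σ _ =>
    (Finset.aestronglyMeasurable_fun_prod _ fun k _ => hM (σ k) k).const_mul _

theorem aestronglyMeasurable_matrix_inv_apply
    (hM : ∀ i j, AEStronglyMeasurable (fun x => M x i j) μ) (i j : ι) :
    AEStronglyMeasurable (fun x => (M x)⁻¹ i j) μ := by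
  have hadj : AEStronglyMeasurable (fun x => (M x).adjugate i j) μ := by
    simp only [adjugate_apply]
    refine aestronglyMeasurable_det fun k l => ?_
    simp only [updateRow_apply]
    split_ifs
    · exact aestronglyMeasurable_const
    · exact hM k l
  simp only [inv_def, Matrix.smul_apply, smul_eq_mul, Ring.inverse_eq_inv']
  exact (aestronglyMeasurable_det hM).aemeasurable.inv.aestronglyMeasurable.mul hadj

end Measurability

section GradedLimit

/-- Entry `(i, j)` of `Φ t` is asymptotic to `L i j * (t - t0) ^ (j - i)` as `t ↓ t0`. The exponent
may be negative, so this is stated for the conjugate of `Φ t` by `diag((t - t0) ^ i)`. -/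
def HasGradedLimit {n : ℕ} (t0 : ℝ) (Φ : ℝ → Matrix (Fin n) (Fin n) ℝ)
    (L : Matrix (Fin n) (Fin n) ℝ) : Prop :=
  Tendsto (fun t => rescale (fun i : Fin n => (t - t0) ^ (i : ℕ))
    (fun j : Fin n => ((t - t0) ^ (j : ℕ))⁻¹) (Φ t)) (𝓝[>] t0) (𝓝 L)

variable {n : ℕ} {t0 : ℝ} {Φ : ℝ → Matrix (Fin n) (Fin n) ℝ} {L : Matrix (Fin n) (Fin n) ℝ}

theorem eventually_forall_pow_ne_zero {ι : Type*} (t0 : ℝ) (e : ι → ℕ) :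
    ∀ᶠ t in 𝓝[>] t0, ∀ i, (t - t0) ^ e i ≠ 0 :=
  (eventually_sub_pos t0).mono fun _ ht _ => (pow_pos ht _).ne'

theorem eventually_forall_inv_pow_ne_zero {ι : Type*} (t0 : ℝ) (e : ι → ℕ) :
    ∀ᶠ t in 𝓝[>] t0, ∀ i, ((t - t0) ^ e i)⁻¹ ≠ 0 :=
  (eventually_forall_pow_ne_zero t0 e).mono fun _ ht i => inv_ne_zero (ht i)

theorem hasGradedLimit_iff : HasGradedLimit t0 Φ L ↔ ∀ i j : Fin n,
    Tendsto (fun t => (t - t0) ^ (i : ℕ) * Φ t i j / (t - t0) ^ (j : ℕ)) (𝓝[>] t0)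
      (𝓝 (L i j)) := by
  refine tendsto_pi_nhds.trans (forall_congr' fun i => tendsto_pi_nhds.trans ?_)
  simp only [rescale_apply, div_eq_mul_inv]

theorem HasGradedLimit.inv (h : HasGradedLimit t0 Φ L) (hL : IsUnit L) :
    HasGradedLimit t0 (fun t => (Φ t)⁻¹) L⁻¹ := by
  have hinv := tendsto_rescale_inv (eventually_forall_pow_ne_zero _ _)
    (eventually_forall_inv_pow_ne_zero _ _) h hL
  simpa only [HasGradedLimit, Pi.inv_def, inv_inv] using hinv

theorem HasGradedLimit.exists_eventually_abs_le (h : HasGradedLimit t0 Φ L) :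
    ∃ K, 0 ≤ K ∧ ∀ᶠ t in 𝓝[>] t0, ∀ i j : Fin n,
      (t - t0) ^ (i : ℕ) * |Φ t i j| ≤ K * (t - t0) ^ (j : ℕ) := by
  obtain ⟨K, hK, hbound⟩ := exists_eventually_norm_rescale_le h
  refine ⟨K, hK, ?_⟩
  filter_upwards [hbound, eventually_sub_pos t0] with t ht hδ i j
  have hij := ht i j
  rwa [← div_eq_mul_inv, norm_div, norm_mul, Real.norm_eq_abs (Φ t i j),
    Real.norm_of_nonneg (by positivity), Real.norm_of_nonneg (by positivity),
    div_le_iff₀ (by positivity)] at hij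

end GradedLimit

section FundamentalMatrix

variable {n : ℕ} {t0 τ : ℝ} {a : ℕ → ℝ → ℝ} {α : ℕ → ℝ}
  {Φ : ℝ → Matrix (Fin (n + 1)) (Fin (n + 1)) ℝ}

theorem triA_mul_last (s : ℝ) (M : Matrix (Fin (n + 1)) (Fin (n + 1)) ℝ) (j : Fin (n + 1)) :
    (triA (n + 1) a s * M) (Fin.last n) j = 0 := by
  rw [Matrix.mul_apply]
  refine Finset.sum_eq_zero fun k _ => ?_
  simp [triA, k.2.ne]

theorem triA_mul_castSucc (s : ℝ) (M : Matrix (Fin (n + 1)) (Fin (n + 1)) ℝ) (i : Fin n)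
    (j : Fin (n + 1)) :
    (triA (n + 1) a s * M) i.castSucc j = a (i + 2) s * M i.succ j := by
  rw [Matrix.mul_apply, Finset.sum_eq_single i.succ]
  · simp [triA]
  · intro k _ hk
    have hki : (k : ℕ) ≠ i + 1 := fun h => hk (Fin.ext h)
    simp [triA, hki]
  · simp

/-- The leading coefficients at `t0` of the fundamental matrix of `triA n a` when each `a l` tends
to `α l`: entry `(i, j)` is the coefficient of `(t - t0) ^ (j - i)`. -/
def leadingMatrix (n : ℕ) (α : ℕ → ℝ) : Matrix (Fin n) (Fin n) ℝ :=
  of fun i j => if i ≤ j then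
    (∏ l ∈ Finset.Ico ((i : ℕ) + 2) (j + 2), α l) / ((j - i : ℕ).factorial : ℝ) else 0

theorem leadingMatrix_self (n : ℕ) (α : ℕ → ℝ) (i : Fin n) : leadingMatrix n α i i = 1 := by
  simp [leadingMatrix]

theorem leadingMatrix_castSucc {i : Fin n} {j : Fin (n + 1)} (hij : i.succ ≤ j) :
    leadingMatrix (n + 1) α i.castSucc j =
      α (i + 2) * leadingMatrix (n + 1) α i.succ j / ((j - (i + 1) : ℕ) + 1) := by
  have hij' : (i : ℕ) + 1 ≤ j := hij
  have hle : i.castSucc ≤ j := i.castSucc_le_succ.trans hij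
  have hsub : (j : ℕ) - i = j - (i + 1) + 1 := by omega
  simp only [leadingMatrix, of_apply, if_pos hij, if_pos hle, Fin.val_castSucc, Fin.val_succ]
  rw [Finset.prod_eq_prod_Ico_succ_bot (by omega), hsub, Nat.factorial_succ, Nat.cast_mul,
    Nat.cast_succ]
  field_simp

theorem isUnit_leadingMatrix (n : ℕ) (α : ℕ → ℝ) : IsUnit (leadingMatrix n α) := by
  have htri : (leadingMatrix n α).IsUpperTriangular := fun i j hji => if_neg (not_le.2 hji)
  rw [isUnit_iff_isUnit_det, det_of_isUpperTriangular htri]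
  simp only [leadingMatrix_self, Finset.prod_const_one, isUnit_one]

theorem leadingMatrix_ne_zero {i j : Fin n} (hij : i ≤ j)
    (hα : ∀ l, 2 ≤ l → l ≤ n → α l ≠ 0) : leadingMatrix n α i j ≠ 0 := by
  rw [leadingMatrix, of_apply, if_pos hij]
  refine div_ne_zero (Finset.prod_ne_zero_iff.2 fun l hl => ?_)
    (Nat.cast_ne_zero.2 (Nat.factorial_ne_zero _))
  obtain ⟨hil, hlj⟩ := Finset.mem_Ico.1 hl
  exact hα l (by omega) (by omega)

namespace IsFundamental

theorem apply_of_le (hΦ : IsFundamental (n + 1) t0 τ (triA (n + 1) a) Φ) {t : ℝ}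
    (ht : t ∈ Icc t0 τ) {i j : Fin (n + 1)} (hji : j ≤ i) :
    Φ t i j = (1 : Matrix (Fin (n + 1)) (Fin (n + 1)) ℝ) i j := by
  induction i using Fin.reverseInduction generalizing t with
  | last => simp [hΦ.2 t ht, triA_mul_last]
  | cast i ih =>
    have hlt : j < i.succ := hji.trans_lt i.castSucc_lt_succ
    have hzero : EqOn (fun s => (triA (n + 1) a s * Φ s) i.castSucc j) 0 (uIcc t0 t) := by
      intro s hs
      rw [uIcc_of_le ht.1] at hs
      simp only [triA_mul_castSucc, ih ⟨hs.1, hs.2.trans ht.2⟩ hlt.le, one_apply_ne hlt.ne',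
        mul_zero, Pi.zero_apply]
    rw [hΦ.2 t ht, intervalIntegral.integral_congr hzero]
    simp

theorem tendsto_div_pow (hΦ : IsFundamental (n + 1) t0 τ (triA (n + 1) a) Φ) (hτ : t0 < τ)
    (ham : ∀ l, 2 ≤ l → l ≤ n + 1 → StronglyMeasurableAtFilter (a l) (𝓝[>] t0))
    (hα : ∀ l, 2 ≤ l → l ≤ n + 1 → Tendsto (a l) (𝓝[>] t0) (𝓝 (α l)))
    {i j : Fin (n + 1)} (hij : i ≤ j) :
    Tendsto (fun t => Φ t i j / (t - t0) ^ (j - i : ℕ)) (𝓝[>] t0)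
      (𝓝 (leadingMatrix (n + 1) α i j)) := by
  have hIoc : Ioc t0 τ ∈ 𝓝[>] t0 := Ioc_mem_nhdsGT hτ
  have hdiag (i : Fin (n + 1)) : Tendsto (fun t => Φ t i i / (t - t0) ^ (i - i : ℕ)) (𝓝[>] t0)
      (𝓝 (leadingMatrix (n + 1) α i i)) := by
    rw [leadingMatrix_self]
    refine tendsto_const_nhds.congr' ?_
    filter_upwards [hIoc] with t ht
    rw [hΦ.apply_of_le (Ioc_subset_Icc_self ht) le_rfl, one_apply_eq, Nat.sub_self, pow_zero,
      div_one]
  induction i using Fin.reverseInduction with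
  | last => obtain rfl := Fin.last_le_iff.1 hij; exact hdiag _
  | cast i ih =>
    obtain rfl | hlt := hij.eq_or_lt
    · exact hdiag _
    have hsucc : i.succ ≤ j := Fin.castSucc_lt_iff_succ_le.1 hlt
    have hil : (i : ℕ) + 2 ≤ n + 1 := by omega
    have hmeas : StronglyMeasurableAtFilter (fun s => a (i + 2) s * Φ s i.succ j) (𝓝[>] t0) :=
      stronglyMeasurableAtFilter_mul (ham (i + 2) (by omega) hil)
        ⟨_, hIoc, ((hΦ.1 i.succ j).mono Ioc_subset_Icc_self).aestronglyMeasurable measurableSet_Ioc⟩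
    have hlim : Tendsto (fun s => a (i + 2) s * Φ s i.succ j / (s - t0) ^ (j - (i + 1) : ℕ))
        (𝓝[>] t0) (𝓝 (α (i + 2) * leadingMatrix (n + 1) α i.succ j)) := by
      simpa only [mul_div_assoc, Fin.val_succ] using (hα (i + 2) (by omega) hil).mul (ih hsucc)
    rw [leadingMatrix_castSucc hsucc]
    refine (tendsto_integral_div_pow hmeas hlim).congr' ?_
    have hexp : (j : ℕ) - (i.castSucc : ℕ) = j - (i + 1) + 1 := by
      have : (i : ℕ) + 1 ≤ j := hsucc
      rw [Fin.val_castSucc]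
      omega
    filter_upwards [hIoc] with t ht
    rw [hΦ.2 t (Ioc_subset_Icc_self ht), one_apply_ne hlt.ne, zero_add, hexp]
    simp only [triA_mul_castSucc]

theorem hasGradedLimit (hΦ : IsFundamental (n + 1) t0 τ (triA (n + 1) a) Φ) (hτ : t0 < τ)
    (ham : ∀ l, 2 ≤ l → l ≤ n + 1 → StronglyMeasurableAtFilter (a l) (𝓝[>] t0))
    (hα : ∀ l, 2 ≤ l → l ≤ n + 1 → Tendsto (a l) (𝓝[>] t0) (𝓝 (α l))) :
    HasGradedLimit t0 Φ (leadingMatrix (n + 1) α) := by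
  refine hasGradedLimit_iff.2 fun i j => ?_
  obtain hij | hji := le_or_gt i j
  · refine (hΦ.tendsto_div_pow hτ ham hα hij).congr' ?_
    filter_upwards [eventually_sub_pos t0] with t hδ
    rw [← mul_div_mul_left _ _ (pow_pos hδ i).ne', pow_mul_pow_sub _ hij]
  · rw [leadingMatrix, of_apply, if_neg (not_le.2 hji)]
    refine tendsto_const_nhds.congr' ?_
    filter_upwards [Ioc_mem_nhdsGT hτ] with t ht
    rw [hΦ.apply_of_le (Ioc_subset_Icc_self ht) hji.le, one_apply_ne hji.ne', mul_zero, zero_div]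

end IsFundamental

end FundamentalMatrix

section ObservabilityGramian

variable {n : ℕ} {t0 : ℝ}

theorem tendsto_rescale_integral_mul {w : ℝ → Fin n → ℝ} {c : Fin n → ℝ}
    (hwm : ∀ i, StronglyMeasurableAtFilter (fun t => w t i) (𝓝[>] t0))
    (hw : ∀ i : Fin n, Tendsto (fun t => w t i / (t - t0) ^ (i : ℕ)) (𝓝[>] t0) (𝓝 (c i))) :
    Tendsto (fun t => rescale (fun i : Fin n => ((t - t0) ^ (i + 1 : ℕ))⁻¹)
        (fun j : Fin n => ((t - t0) ^ (j : ℕ))⁻¹) (of fun i j => ∫ s in t0..t, w s i * w s j))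
      (𝓝[>] t0) (𝓝 (rescale c c (hilbertMatrix n))) := by
  refine tendsto_pi_nhds.2 fun i => tendsto_pi_nhds.2 fun j => ?_
  have hprod : Tendsto (fun s => w s i * w s j / (s - t0) ^ (i + j : ℕ)) (𝓝[>] t0)
      (𝓝 (c i * c j)) := by
    simpa only [pow_add, mul_div_mul_comm] using (hw i).mul (hw j)
  have hint := tendsto_integral_div_pow (stronglyMeasurableAtFilter_mul (hwm i) (hwm j)) hprod
  have hlim : rescale c c (hilbertMatrix n) i j = c i * c j / ((i + j : ℕ) + 1) := by
    rw [rescale_apply, hilbertMatrix, of_apply, Nat.cast_add]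
    ring
  rw [hlim]
  refine hint.congr fun t => ?_
  rw [rescale_apply, of_apply, add_right_comm, pow_add, div_eq_mul_inv, mul_inv]
  ring

theorem triC_gram (M : Matrix (Fin (n + 1)) (Fin (n + 1)) ℝ) :
    Mᵀ * (triC (n + 1))ᵀ * triC (n + 1) * M = vecMulVec (M 0) (M 0) := by
  have hrow : triC (n + 1) * M = of fun _ => M 0 := by
    ext k j
    simp [Matrix.mul_apply, triC]
  ext i j
  rw [Matrix.mul_assoc, ← transpose_mul, hrow]
  simp [Matrix.mul_apply, vecMulVec_apply]

variable {Φ : ℝ → Matrix (Fin (n + 1)) (Fin (n + 1)) ℝ} {L : Matrix (Fin (n + 1)) (Fin (n + 1)) ℝ}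

theorem Psi_triC (t : ℝ) : Psi (n + 1) 1 t0 (fun _ => triC (n + 1)) Φ t =
    of fun i j => ∫ s in t0..t, Φ s 0 i * Φ s 0 j := by
  ext i j
  simp only [Psi, triC_gram, vecMulVec_apply, of_apply]

namespace HasGradedLimit

theorem tendsto_rescale_Psi (hΦ : HasGradedLimit t0 Φ L)
    (hΦm : ∀ j, StronglyMeasurableAtFilter (fun t => Φ t 0 j) (𝓝[>] t0)) :
    Tendsto (fun t => rescale (fun i : Fin (n + 1) => ((t - t0) ^ (i + 1 : ℕ))⁻¹)
        (fun j : Fin (n + 1) => ((t - t0) ^ (j : ℕ))⁻¹)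
        (Psi (n + 1) 1 t0 (fun _ => triC (n + 1)) Φ t))
      (𝓝[>] t0) (𝓝 (rescale (L 0) (L 0) (hilbertMatrix (n + 1)))) := by
  simp only [Psi_triC]
  refine tendsto_rescale_integral_mul hΦm fun j => ?_
  simpa using hasGradedLimit_iff.1 hΦ 0 j

theorem eventually_isUnit_Psi (hΦ : HasGradedLimit t0 Φ L)
    (hΦm : ∀ j, StronglyMeasurableAtFilter (fun t => Φ t 0 j) (𝓝[>] t0)) (hL : ∀ j, L 0 j ≠ 0) :
    ∀ᶠ t in 𝓝[>] t0, IsUnit (Psi (n + 1) 1 t0 (fun _ => triC (n + 1)) Φ t) :=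
  eventually_isUnit_of_tendsto_rescale
    (eventually_forall_inv_pow_ne_zero _ _) (eventually_forall_inv_pow_ne_zero _ _)
    (hΦ.tendsto_rescale_Psi hΦm) ((isUnit_rescale_iff hL hL).2 (isUnit_hilbertMatrix _))

theorem exists_eventually_abs_inv_Psi_le (hΦ : HasGradedLimit t0 Φ L)
    (hΦm : ∀ j, StronglyMeasurableAtFilter (fun t => Φ t 0 j) (𝓝[>] t0)) (hL : ∀ j, L 0 j ≠ 0) :
    ∃ K, 0 ≤ K ∧ ∀ᶠ t in 𝓝[>] t0, ∀ i j : Fin (n + 1), (t - t0) ^ (i : ℕ) *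
      |(Psi (n + 1) 1 t0 (fun _ => triC (n + 1)) Φ t)⁻¹ i j| * (t - t0) ^ (j + 1 : ℕ) ≤ K := by
  have hinv := tendsto_rescale_inv
    (eventually_forall_inv_pow_ne_zero _ _) (eventually_forall_inv_pow_ne_zero _ _)
    (hΦ.tendsto_rescale_Psi hΦm) ((isUnit_rescale_iff hL hL).2 (isUnit_hilbertMatrix _))
  obtain ⟨K, hK, hbound⟩ := exists_eventually_norm_rescale_le hinv
  refine ⟨K, hK, ?_⟩
  filter_upwards [hbound, eventually_sub_pos t0] with t ht hδ i j
  simpa only [Pi.inv_apply, inv_inv, norm_mul, norm_pow, Real.norm_eq_abs, abs_of_pos hδ]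
    using ht i j

end HasGradedLimit

end ObservabilityGramian

section Duhamel

/-- The inner integral `∫_{t0}^ρ Φ(s)⁻¹ v(s) ds` of `Xi`, for an inhomogeneity `v`: the
variation-of-constants contribution of `v`, transported back to time `t0`. -/
def duhamelIntegral {n : ℕ} (t0 : ℝ) (Φ : ℝ → Matrix (Fin n) (Fin n) ℝ) (v : ℝ → Fin n → ℝ)
    (ρ : ℝ) : Fin n → ℝ :=
  fun i => ∫ s in t0..ρ, ((Φ s)⁻¹ *ᵥ v s) i

variable {n : ℕ} {t0 t : ℝ} {Φ : ℝ → Matrix (Fin (n + 1)) (Fin (n + 1)) ℝ}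
  {v v' : ℝ → Fin (n + 1) → ℝ}

theorem aestronglyMeasurable_duhamelIntegral
    (hΦ : ∀ i j, AEStronglyMeasurable (fun s => Φ s i j) (volume.restrict (Ioc t0 t)))
    (hv : ∀ i, AEStronglyMeasurable (fun s => v s i) (volume.restrict (Ioc t0 t)))
    (i : Fin (n + 1)) :
    AEStronglyMeasurable (fun ρ => duhamelIntegral t0 Φ v ρ i) (volume.restrict (Ioc t0 t)) :=
  aestronglyMeasurable_primitive
    (aestronglyMeasurable_mulVec (aestronglyMeasurable_matrix_inv_apply hΦ) hv i)

theorem abs_duhamelIntegral_sub_le {K S : ℝ} (htt : t0 ≤ t) (hK : 0 ≤ K)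
    (hΦ : ∀ i j, AEStronglyMeasurable (fun s => Φ s i j) (volume.restrict (Ioc t0 t)))
    (hv : ∀ i, AEStronglyMeasurable (fun s => v s i) (volume.restrict (Ioc t0 t)))
    (hv' : ∀ i, AEStronglyMeasurable (fun s => v' s i) (volume.restrict (Ioc t0 t)))
    (hinv : ∀ s ∈ Ioc t0 t, ∀ i j : Fin (n + 1),
      (s - t0) ^ (i : ℕ) * |(Φ s)⁻¹ i j| ≤ K * (s - t0) ^ (j : ℕ))
    (hvv' : ∀ s ∈ Ioc t0 t, ∃ r, |r| ≤ S ∧ v s - v' s = Pi.single (Fin.last n) r)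
    (j : Fin (n + 1)) :
    (t - t0) ^ (j : ℕ) * |duhamelIntegral t0 Φ v t j - duhamelIntegral t0 Φ v' t j| ≤
      K * S * (t - t0) ^ (n + 1) := by
  have hjn : (j : ℕ) ≤ n := Nat.lt_succ_iff.1 j.2
  have hbound (s : ℝ) (hs : s ∈ Ioc t0 t) :
      ‖((Φ s)⁻¹ *ᵥ v s) j - ((Φ s)⁻¹ *ᵥ v' s) j‖ ≤ K * (t - t0) ^ (n - j : ℕ) * S := by
    obtain ⟨r, hr, hsub⟩ := hvv' s hs
    have hs0 : 0 < s - t0 := sub_pos.2 hs.1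
    have hlast : |(Φ s)⁻¹ j (Fin.last n)| ≤ K * (s - t0) ^ (n - j : ℕ) := by
      refine le_of_mul_le_mul_left ?_ (pow_pos hs0 j)
      rw [mul_left_comm, pow_mul_pow_sub _ hjn]
      simpa using hinv s hs j (Fin.last n)
    rw [← Pi.sub_apply, ← mulVec_sub, hsub, mulVec_single, Real.norm_eq_abs]
    simp only [Pi.smul_apply, col_apply, MulOpposite.smul_eq_mul_unop, MulOpposite.unop_op, abs_mul]
    gcongr
    refine hlast.trans ?_
    gcongr
    exact hs.2
  calc _ ≤ (t - t0) ^ (j : ℕ) * (K * (t - t0) ^ (n - j : ℕ) * S * (t - t0)) := by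
        refine mul_le_mul_of_nonneg_left ?_ (pow_nonneg (sub_nonneg.2 htt) _)
        exact norm_integral_sub_integral_le_of_norm_le_const htt
          (aestronglyMeasurable_mulVec (aestronglyMeasurable_matrix_inv_apply hΦ) hv j)
          (aestronglyMeasurable_mulVec (aestronglyMeasurable_matrix_inv_apply hΦ) hv' j) hbound
    _ = K * S * ((t - t0) ^ (j : ℕ) * (t - t0) ^ (n - j : ℕ) * (t - t0)) := by ring
    _ = K * S * (t - t0) ^ (n + 1) := by rw [pow_mul_pow_sub _ hjn, pow_succ]

theorem abs_mul_dotProduct_duhamelIntegral_sub_le {K S : ℝ} (htt : t0 ≤ t) (hK : 0 ≤ K)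
    (hΦm : ∀ i j, AEStronglyMeasurable (fun s => Φ s i j) (volume.restrict (Ioc t0 t)))
    (hv : ∀ i, AEStronglyMeasurable (fun s => v s i) (volume.restrict (Ioc t0 t)))
    (hv' : ∀ i, AEStronglyMeasurable (fun s => v' s i) (volume.restrict (Ioc t0 t)))
    (hΦ : ∀ j : Fin (n + 1), |Φ t 0 j| ≤ K * (t - t0) ^ (j : ℕ))
    (hinv : ∀ s ∈ Ioc t0 t, ∀ i j : Fin (n + 1),
      (s - t0) ^ (i : ℕ) * |(Φ s)⁻¹ i j| ≤ K * (s - t0) ^ (j : ℕ))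
    (hvv' : ∀ s ∈ Ioc t0 t, ∃ r, |r| ≤ S ∧ v s - v' s = Pi.single (Fin.last n) r)
    (i : Fin (n + 1)) :
    |Φ t 0 i * (Φ t 0 ⬝ᵥ duhamelIntegral t0 Φ v t) -
        Φ t 0 i * (Φ t 0 ⬝ᵥ duhamelIntegral t0 Φ v' t)| ≤
      (n + 1) * K ^ 3 * S * (t - t0) ^ (n + 1) * (t - t0) ^ (i : ℕ) := by
  have hδ : 0 ≤ t - t0 := sub_nonneg.2 htt
  have hdot : |Φ t 0 ⬝ᵥ (duhamelIntegral t0 Φ v t - duhamelIntegral t0 Φ v' t)| ≤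
      (n + 1) * (K ^ 2 * S * (t - t0) ^ (n + 1)) := by
    calc _ ≤ ∑ j, |Φ t 0 j * (duhamelIntegral t0 Φ v t j - duhamelIntegral t0 Φ v' t j)| :=
          Finset.abs_sum_le_sum_abs _ _
      _ ≤ ∑ _j : Fin (n + 1), K ^ 2 * S * (t - t0) ^ (n + 1) := by
          refine Finset.sum_le_sum fun j _ => ?_
          have hj := abs_duhamelIntegral_sub_le htt hK hΦm hv hv' hinv hvv' j
          rw [abs_mul]
          calc _ ≤ K * (t - t0) ^ (j : ℕ) *
                |duhamelIntegral t0 Φ v t j - duhamelIntegral t0 Φ v' t j| := by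
                gcongr
                exact hΦ j
            _ ≤ K * (K * S * (t - t0) ^ (n + 1)) := by
                rw [mul_assoc]
                exact mul_le_mul_of_nonneg_left hj hK
            _ = K ^ 2 * S * (t - t0) ^ (n + 1) := by ring
      _ = (n + 1) * (K ^ 2 * S * (t - t0) ^ (n + 1)) := by
          rw [Finset.sum_const, Finset.card_univ, Fintype.card_fin, nsmul_eq_mul, Nat.cast_succ]
  rw [← mul_sub, ← dotProduct_sub, abs_mul]
  calc _ ≤ K * (t - t0) ^ (i : ℕ) * ((n + 1) * (K ^ 2 * S * (t - t0) ^ (n + 1))) :=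
        mul_le_mul (hΦ i) hdot (abs_nonneg _) (mul_nonneg hK (pow_nonneg hδ _))
    _ = _ := by ring

theorem Xi_triC_apply (g : ℝ → (Fin (n + 1) → ℝ) → Fin (n + 1) → ℝ) (z : ℝ → Fin (n + 1) → ℝ)
    (i : Fin (n + 1)) : Xi (n + 1) 1 t0 (fun _ => triC (n + 1)) Φ g z t i =
      ∫ ρ in t0..t, Φ ρ 0 i * (Φ ρ 0 ⬝ᵥ duhamelIntegral t0 Φ (fun s => g s (z s)) ρ) := by
  simp only [Xi, triC_gram, vecMulVec_mulVec, Pi.smul_apply, MulOpposite.smul_eq_mul_unop,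
    MulOpposite.unop_op]
  rfl

theorem abs_Xi_triC_sub_le {g : ℝ → (Fin (n + 1) → ℝ) → Fin (n + 1) → ℝ}
    {z z' : ℝ → Fin (n + 1) → ℝ} {K S : ℝ} (htt : t0 < t) (hK : 0 ≤ K)
    (hΦm : ∀ i j, AEStronglyMeasurable (fun s => Φ s i j) (volume.restrict (Ioc t0 t)))
    (hz : ∀ i, AEStronglyMeasurable (fun s => g s (z s) i) (volume.restrict (Ioc t0 t)))
    (hz' : ∀ i, AEStronglyMeasurable (fun s => g s (z' s) i) (volume.restrict (Ioc t0 t)))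
    (hΦ : ∀ s ∈ Ioc t0 t, ∀ j : Fin (n + 1), |Φ s 0 j| ≤ K * (s - t0) ^ (j : ℕ))
    (hinv : ∀ s ∈ Ioc t0 t, ∀ i j : Fin (n + 1),
      (s - t0) ^ (i : ℕ) * |(Φ s)⁻¹ i j| ≤ K * (s - t0) ^ (j : ℕ))
    (hg : ∀ s ∈ Ioc t0 t, ∃ r, |r| ≤ S ∧ g s (z s) - g s (z' s) = Pi.single (Fin.last n) r)
    (i : Fin (n + 1)) :
    |Xi (n + 1) 1 t0 (fun _ => triC (n + 1)) Φ g z t i -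
        Xi (n + 1) 1 t0 (fun _ => triC (n + 1)) Φ g z' t i| ≤
      (n + 1) * K ^ 3 * S * (t - t0) ^ (n + 1) * (t - t0) ^ (i + 1 : ℕ) := by
  have hS : 0 ≤ S := by
    obtain ⟨r, hr, -⟩ := hg t ⟨htt, le_rfl⟩
    exact (abs_nonneg r).trans hr
  have hmeas {w : ℝ → Fin (n + 1) → ℝ}
      (hw : ∀ i, AEStronglyMeasurable (fun s => g s (w s) i) (volume.restrict (Ioc t0 t))) :
      AEStronglyMeasurable
        (fun ρ => Φ ρ 0 i * (Φ ρ 0 ⬝ᵥ duhamelIntegral t0 Φ (fun s => g s (w s)) ρ))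
        (volume.restrict (Ioc t0 t)) :=
    (hΦm 0 i).mul (aestronglyMeasurable_mulVec hΦm
      (aestronglyMeasurable_duhamelIntegral hΦm hw) 0)
  rw [Xi_triC_apply, Xi_triC_apply, ← Real.norm_eq_abs, pow_succ (t - t0) (i : ℕ), ← mul_assoc]
  refine norm_integral_sub_integral_le_of_norm_le_const htt.le (hmeas hz) (hmeas hz')
    fun ρ hρ => ?_
  have hsub : Ioc t0 ρ ⊆ Ioc t0 t := Ioc_subset_Ioc_right hρ.2
  refine (abs_mul_dotProduct_duhamelIntegral_sub_le hρ.1.le hK (fun i j => (hΦm i j).mono_set hsub)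
    (fun i => (hz i).mono_set hsub) (fun i => (hz' i).mono_set hsub) (hΦ ρ hρ)
    (fun s hs => hinv s (hsub hs)) (fun s hs => hg s (hsub hs)) i).trans ?_
  have hρ0 : 0 ≤ ρ - t0 := sub_nonneg.2 hρ.1.le
  gcongr
  · exact hρ.2
  · exact hρ.2

end Duhamel

section LinearGain

variable {n : ℕ} {t0 τ : ℝ}

theorem norm_mulVec_le_of_graded {P : Matrix (Fin (n + 1)) (Fin (n + 1)) ℝ}
    {ξ : Fin (n + 1) → ℝ} {δ K M : ℝ} (hδ : 0 < δ) (hδ1 : δ ≤ 1) (hK : 0 ≤ K) (hM : 0 ≤ M)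
    (hP : ∀ i j : Fin (n + 1), δ ^ (i : ℕ) * |P i j| * δ ^ (j + 1 : ℕ) ≤ K)
    (hξ : ∀ j : Fin (n + 1), |ξ j| ≤ M * δ ^ (n + 1) * δ ^ (j + 1 : ℕ)) :
    ‖P *ᵥ ξ‖ ≤ (n + 1) * K * M * δ := by
  have hterm (i j : Fin (n + 1)) : |P i j * ξ j| ≤ K * M * δ := by
    have hin : (i : ℕ) ≤ n := Nat.lt_succ_iff.1 i.2
    calc |P i j * ξ j| ≤ |P i j| * (M * δ ^ (n + 1) * δ ^ (j + 1 : ℕ)) := by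
          rw [abs_mul]
          exact mul_le_mul_of_nonneg_left (hξ j) (abs_nonneg _)
      _ = δ ^ (i : ℕ) * |P i j| * δ ^ (j + 1 : ℕ) * (M * δ ^ (n - i : ℕ) * δ) := by
          rw [pow_succ δ n, ← pow_mul_pow_sub δ hin]
          ring
      _ ≤ K * (M * 1 * δ) := by
          gcongr
          · exact hP i j
          · exact pow_le_one₀ hδ.le hδ1
      _ = K * M * δ := by ring
  refine (pi_norm_le_iff_of_nonneg (by positivity)).2 fun i => ?_
  calc ‖(P *ᵥ ξ) i‖ ≤ ∑ j, |P i j * ξ j| :=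
        Finset.abs_sum_le_sum_abs (fun j => P i j * ξ j) Finset.univ
    _ ≤ ∑ _j : Fin (n + 1), K * M * δ := Finset.sum_le_sum fun j _ => hterm i j
    _ = (n + 1) * K * M * δ := by
        rw [Finset.sum_const, Finset.card_univ, Fintype.card_fin, nsmul_eq_mul, Nat.cast_succ]
        ring

variable {Φ : ℝ → Matrix (Fin (n + 1)) (Fin (n + 1)) ℝ} {L : Matrix (Fin (n + 1)) (Fin (n + 1)) ℝ}

theorem HasGradedLimit.exists_eventually_abs_le_and_abs_inv_le (hΦ : HasGradedLimit t0 Φ L)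
    (hL : IsUnit L) : ∃ K, 0 ≤ K ∧ ∀ᶠ t in 𝓝[>] t0,
      (∀ j : Fin (n + 1), |Φ t 0 j| ≤ K * (t - t0) ^ (j : ℕ)) ∧
      ∀ i j : Fin (n + 1), (t - t0) ^ (i : ℕ) * |(Φ t)⁻¹ i j| ≤ K * (t - t0) ^ (j : ℕ) := by
  obtain ⟨K₁, hK₁, hΦK⟩ := hΦ.exists_eventually_abs_le
  obtain ⟨K₂, -, hinvK⟩ := (hΦ.inv hL).exists_eventually_abs_le
  refine ⟨max K₁ K₂, le_max_of_le_left hK₁, ?_⟩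
  filter_upwards [hΦK, hinvK, eventually_sub_pos t0] with t h₁ h₂ hδ
  refine ⟨fun j => ?_, fun i j => (h₂ i j).trans ?_⟩
  · have hj := h₁ 0 j
    rw [Fin.val_zero, pow_zero, one_mul] at hj
    exact hj.trans (mul_le_mul_of_nonneg_right (le_max_left _ _) (pow_pos hδ _).le)
  · exact mul_le_mul_of_nonneg_right (le_max_right _ _) (pow_pos hδ _).le

theorem HasGradedLimit.exists_eventually_norm_inv_Psi_mulVec_Xi_sub_le
    (hΦ : HasGradedLimit t0 Φ L) (hL : IsUnit L) (hL0 : ∀ j, L 0 j ≠ 0) (hτ : t0 < τ)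
    (hΦm : ∀ i j, AEStronglyMeasurable (fun t => Φ t i j) (volume.restrict (Ioc t0 τ)))
    (g : ℝ → (Fin (n + 1) → ℝ) → Fin (n + 1) → ℝ) :
    ∃ B, ∀ᶠ t in 𝓝[>] t0, ∀ (z z' : ℝ → Fin (n + 1) → ℝ) (S : ℝ),
      (∀ i, AEStronglyMeasurable (fun s => g s (z s) i) (volume.restrict (Ioc t0 t))) →
      (∀ i, AEStronglyMeasurable (fun s => g s (z' s) i) (volume.restrict (Ioc t0 t))) →
      (∀ s ∈ Ioc t0 t, ∃ r, |r| ≤ S ∧ g s (z s) - g s (z' s) = Pi.single (Fin.last n) r) →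
      ‖(Psi (n + 1) 1 t0 (fun _ => triC (n + 1)) Φ t)⁻¹ *ᵥ
        (Xi (n + 1) 1 t0 (fun _ => triC (n + 1)) Φ g z t -
          Xi (n + 1) 1 t0 (fun _ => triC (n + 1)) Φ g z' t)‖ ≤ B * (t - t0) * S := by
  obtain ⟨K, hK, hΦK⟩ := hΦ.exists_eventually_abs_le_and_abs_inv_le hL
  obtain ⟨K', hK', hΨK'⟩ := hΦ.exists_eventually_abs_inv_Psi_le
    (fun j => ⟨_, Ioc_mem_nhdsGT hτ, hΦm 0 j⟩) hL0
  refine ⟨(n + 1) * K' * ((n + 1) * K ^ 3), ?_⟩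
  filter_upwards [eventually_forall_Ioc hΦK, hΨK', Ioc_mem_nhdsGT hτ,
    Ioc_mem_nhdsGT (lt_add_one t0)] with t hΦKt hΨt htτ ht1 z z' S hz hz' hg
  have hS : 0 ≤ S := by
    obtain ⟨r, hr, -⟩ := hg t ⟨htτ.1, le_rfl⟩
    exact (abs_nonneg r).trans hr
  have hXi := abs_Xi_triC_sub_le htτ.1 hK
    (fun i j => (hΦm i j).mono_set (Ioc_subset_Ioc_right htτ.2)) hz hz'
    (fun s hs => (hΦKt s hs).1) (fun s hs => (hΦKt s hs).2) hg
  calc _ ≤ (n + 1) * K' * ((n + 1) * K ^ 3 * S) * (t - t0) :=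
        norm_mulVec_le_of_graded (sub_pos.2 htτ.1) (by linarith [ht1.2]) hK' (by positivity) hΨt hXi
    _ = (n + 1) * K' * ((n + 1) * K ^ 3) * (t - t0) * S := by ring

end LinearGain

section Contraction

theorem supN_nonneg {n : ℕ} (a b : ℝ) (d : ℝ → Fin n → ℝ) : 0 ≤ supN n a b d :=
  Real.iSup_nonneg fun _ => norm_nonneg _

theorem norm_le_supN {n : ℕ} {a b : ℝ} {d : ℝ → Fin n → ℝ} (hd : ContinuousOn d (Icc a b)) {s : ℝ}
    (hs : s ∈ Icc a b) : ‖d s‖ ≤ supN n a b d := by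
  have hbdd : BddAbove (range fun t : Icc a b => ‖d t‖) := by
    simpa only [image_eq_range] using isCompact_Icc.bddAbove_image hd.norm
  exact le_ciSup hbdd ⟨s, hs⟩

variable {n : ℕ} {t0 τ : ℝ} {f : ℕ → ℝ → ℝ} {fn : ℝ → (Fin (n + 1) → ℝ) → ℝ}

theorem triG_sub_triG (s : ℝ) (x y : Fin (n + 1) → ℝ) :
    triG (n + 1) f fn s x - triG (n + 1) f fn s y = Pi.single (Fin.last n) (fn s x - fn s y) := by
  ext k
  by_cases hk : k = Fin.last n
  · simp [triG, hk]
  · have hkn : (k : ℕ) ≠ n := fun h => hk (Fin.ext h)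
    simp [triG, hk, hkn]

theorem aestronglyMeasurable_triG {μ : Measure ℝ} {s : Set ℝ} {d : ℝ → Fin (n + 1) → ℝ}
    (hs : MeasurableSet s)
    (hf : ∀ l, 1 ≤ l → l ≤ n → AEStronglyMeasurable (f l) (μ.restrict s))
    (hfnm : ∀ x, Measurable fun t => fn t x) (hfnc : ∀ t ∈ s, Continuous (fn t))
    (hd : AEMeasurable d (μ.restrict s)) (k : Fin (n + 1)) :
    AEStronglyMeasurable (fun t => triG (n + 1) f fn t (d t) k) (μ.restrict s) := by
  by_cases hk : (k : ℕ) = n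
  · simpa only [triG, Nat.add_sub_cancel, if_pos hk] using
      aestronglyMeasurable_comp_of_caratheodory hs hfnm hfnc hd
  · simpa only [triG, Nat.add_sub_cancel, if_neg hk] using hf (k + 1) (by omega) (by omega)

theorem HasGradedLimit.exists_eventually_iSup_norm_inv_Psi_mulVec_Xi_sub_le
    {Φ : ℝ → Matrix (Fin (n + 1)) (Fin (n + 1)) ℝ} {L : Matrix (Fin (n + 1)) (Fin (n + 1)) ℝ}
    (hΦ : HasGradedLimit t0 Φ L) (hL : IsUnit L) (hL0 : ∀ j, L 0 j ≠ 0) (hτ : t0 < τ)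
    (hΦm : ∀ i j, AEStronglyMeasurable (fun t => Φ t i j) (volume.restrict (Ioc t0 τ)))
    (hf : ∀ l, 1 ≤ l → l ≤ n → AEStronglyMeasurable (f l) (volume.restrict (Ioc t0 τ)))
    (hfnm : ∀ x, Measurable fun t => fn t x) (hfnc : ∀ t ∈ Ioc t0 τ, Continuous (fn t))
    {R K : ℝ} (hfnLip : ∀ t ∈ Ioc t0 τ, ∀ x y, ‖x‖ ≤ R → ‖y‖ ≤ R →
      |fn t x - fn t y| ≤ K * ‖x - y‖) :
    ∃ B, ∀ᶠ T in 𝓝[>] t0, ∀ d₁ d₂ : ℝ → Fin (n + 1) → ℝ,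
      ContinuousOn d₁ (Icc t0 T) → ContinuousOn d₂ (Icc t0 T) →
      supN (n + 1) t0 T d₁ ≤ R → supN (n + 1) t0 T d₂ ≤ R →
      (⨆ t : Ioc t0 T, ‖(Psi (n + 1) 1 t0 (fun _ => triC (n + 1)) Φ t)⁻¹ *ᵥ
        (Xi (n + 1) 1 t0 (fun _ => triC (n + 1)) Φ (triG (n + 1) f fn) d₁ t -
          Xi (n + 1) 1 t0 (fun _ => triC (n + 1)) Φ (triG (n + 1) f fn) d₂ t)‖) ≤
        B * (T - t0) * supN (n + 1) t0 T (fun s => d₁ s - d₂ s) := by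
  obtain ⟨B, hgain⟩ := hΦ.exists_eventually_norm_inv_Psi_mulVec_Xi_sub_le hL hL0 hτ hΦm
    (triG (n + 1) f fn)
  refine ⟨|B| * |K|, ?_⟩
  filter_upwards [eventually_forall_Ioc hgain, Ioc_mem_nhdsGT hτ]
    with T hT hTτ d₁ d₂ hd₁ hd₂ hR₁ hR₂
  set S := supN (n + 1) t0 T (fun s => d₁ s - d₂ s)
  have hS : 0 ≤ S := supN_nonneg _ _ _
  have hfnS : ∀ s ∈ Ioc t0 T, |fn s (d₁ s) - fn s (d₂ s)| ≤ |K| * S := fun s hs => by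
    have hs' := Ioc_subset_Icc_self hs
    calc _ ≤ K * ‖d₁ s - d₂ s‖ := hfnLip s ⟨hs.1, hs.2.trans hTτ.2⟩ _ _
          ((norm_le_supN hd₁ hs').trans hR₁) ((norm_le_supN hd₂ hs').trans hR₂)
      _ ≤ |K| * S := mul_le_mul (le_abs_self K) (norm_le_supN (hd₁.sub hd₂) hs') (norm_nonneg _)
        (abs_nonneg K)
  have hmeas {d : ℝ → Fin (n + 1) → ℝ} {t : ℝ} (hd : ContinuousOn d (Icc t0 T))
      (ht : t ∈ Ioc t0 T) (k : Fin (n + 1)) : AEStronglyMeasurable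
        (fun s => triG (n + 1) f fn s (d s) k) (volume.restrict (Ioc t0 t)) := by
    have hsub : Ioc t0 t ⊆ Ioc t0 τ := Ioc_subset_Ioc_right (ht.2.trans hTτ.2)
    have hdt : ContinuousOn d (Ioc t0 t) :=
      hd.mono ((Ioc_subset_Ioc_right ht.2).trans Ioc_subset_Icc_self)
    exact aestronglyMeasurable_triG measurableSet_Ioc (fun l h1 hn => (hf l h1 hn).mono_set hsub)
      hfnm (fun s hs => hfnc s (hsub hs)) (hdt.aemeasurable measurableSet_Ioc) k
  refine Real.iSup_le (fun ⟨t, ht⟩ => ?_) (by have := sub_pos.2 hTτ.1; positivity)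
  have htpos : 0 < t - t0 := sub_pos.2 ht.1
  calc _ ≤ B * (t - t0) * (|K| * S) :=
        hT t ht d₁ d₂ _ (hmeas hd₁ ht) (hmeas hd₂ ht) fun s hs =>
          ⟨_, hfnS s (Ioc_subset_Ioc_right ht.2 hs), triG_sub_triG s _ _⟩
    _ ≤ |B| * (T - t0) * (|K| * S) := by
        gcongr
        · exact le_abs_self B
        · exact ht.2
    _ = |B| * |K| * (T - t0) * S := by ring

end Contraction

theorem TriRegular.intervalIntegrable {n : ℕ} {t0 τ : ℝ} {a f : ℕ → ℝ → ℝ}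
    {fn : ℝ → (Fin n → ℝ) → ℝ} (h : TriRegular n t0 τ a f fn) (hτ : t0 ≤ τ) {l : ℕ} (h1 : 1 ≤ l)
    (hl : l ≤ n - 1) : IntervalIntegrable (f l) volume t0 τ := by
  obtain ⟨-, -, hfm, hfb, -, -⟩ := h
  obtain ⟨M, hM⟩ := hfb l h1 hl
  rw [intervalIntegrable_iff_integrableOn_Icc_of_le hτ]
  exact .of_bound measure_Icc_lt_top (hfm l h1 hl).aestronglyMeasurable M
    (ae_restrict_of_forall_mem measurableSet_Icc hM)

theorem stmt16_general {n : ℕ} {t0 τ : ℝ} (hτ : t0 < τ) {a f : ℕ → ℝ → ℝ}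
    {fn : ℝ → (Fin (n + 1) → ℝ) → ℝ} {α : ℕ → ℝ}
    {Φ : ℝ → Matrix (Fin (n + 1)) (Fin (n + 1)) ℝ}
    (hΦ : IsFundamental (n + 1) t0 τ (triA (n + 1) a) Φ)
    (ham : ∀ l, 2 ≤ l → l ≤ n + 1 → StronglyMeasurableAtFilter (a l) (𝓝[>] t0))
    (hα : ∀ l, 2 ≤ l → l ≤ n + 1 → Tendsto (a l) (𝓝[>] t0) (𝓝 (α l)) ∧ α l ≠ 0)
    (hf : ∀ l, 1 ≤ l → l ≤ n → IntervalIntegrable (f l) volume t0 τ)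
    (hfnm : ∀ x, Measurable fun t => fn t x) (hfnc : ∀ t ∈ Ioc t0 τ, Continuous (fn t))
    {R K : ℝ} (hfnLip : ∀ t ∈ Ioc t0 τ, ∀ x y, ‖x‖ ≤ R → ‖y‖ ≤ R →
      |fn t x - fn t y| ≤ K * ‖x - y‖) {ℓ θ : ℝ} (hℓ : 0 < ℓ) (hθ : 0 < θ) :
    ∃ τ' ∈ Ioc t0 (min (t0 + θ) τ),
      (∀ t ∈ Ioc t0 τ', IsUnit (Psi (n + 1) 1 t0 (fun _ => triC (n + 1)) Φ t)) ∧
      ∀ d₁ d₂ : ℝ → Fin (n + 1) → ℝ,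
        ContinuousOn d₁ (Icc t0 τ') → ContinuousOn d₂ (Icc t0 τ') →
        supN (n + 1) t0 τ' d₁ ≤ R → supN (n + 1) t0 τ' d₂ ≤ R →
        (⨆ t : Ioc t0 τ', ‖(Psi (n + 1) 1 t0 (fun _ => triC (n + 1)) Φ t)⁻¹ *ᵥ
          (Xi (n + 1) 1 t0 (fun _ => triC (n + 1)) Φ (triG (n + 1) f fn) d₁ t -
            Xi (n + 1) 1 t0 (fun _ => triC (n + 1)) Φ (triG (n + 1) f fn) d₂ t)‖) ≤
          ℓ * supN (n + 1) t0 τ' (fun s => d₁ s - d₂ s) := by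
  have hgraded := hΦ.hasGradedLimit hτ ham fun l h2 hn => (hα l h2 hn).1
  have hΦm (i j) : AEStronglyMeasurable (fun t => Φ t i j) (volume.restrict (Ioc t0 τ)) :=
    ((hΦ.1 i j).mono Ioc_subset_Icc_self).aestronglyMeasurable measurableSet_Ioc
  have hL0 (j) : leadingMatrix (n + 1) α 0 j ≠ 0 :=
    leadingMatrix_ne_zero (Fin.zero_le j) fun l h2 hn => (hα l h2 hn).2
  obtain ⟨B, hB⟩ := hgraded.exists_eventually_iSup_norm_inv_Psi_mulVec_Xi_sub_le
    (isUnit_leadingMatrix (n + 1) α) hL0 hτ hΦm (fun l h1 hn => (hf l h1 hn).1.aestronglyMeasurable)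
    hfnm hfnc hfnLip
  have hsmall : ∀ᶠ T in 𝓝[>] t0, B * (T - t0) < ℓ := by
    have hlim : Tendsto (fun T => B * (T - t0)) (𝓝[>] t0) (𝓝 (B * (t0 - t0))) :=
      Continuous.continuousWithinAt (by fun_prop)
    exact hlim.eventually_lt_const (by simpa using hℓ)
  have hunit := hgraded.eventually_isUnit_Psi (fun j => ⟨_, Ioc_mem_nhdsGT hτ, hΦm 0 j⟩) hL0
  have hrange : ∀ᶠ T in 𝓝[>] t0, T ∈ Ioc t0 (min (t0 + θ) τ) :=
    Ioc_mem_nhdsGT (lt_min (lt_add_of_pos_right t0 hθ) hτ)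
  obtain ⟨T, hT, hunitT, hBT, hsmallT⟩ :=
    (hrange.and ((eventually_forall_Ioc hunit).and (hB.and hsmall))).exists
  refine ⟨T, hT, hunitT, fun d₁ d₂ hd₁ hd₂ hR₁ hR₂ => ?_⟩
  exact (hBT d₁ d₂ hd₁ hd₂ hR₁ hR₂).trans
    (mul_le_mul_of_nonneg_right hsmallT.le (supN_nonneg _ _ _))

theorem stmt16 (n : ℕ) (hn : 2 ≤ n) (t0 τ : ℝ) (ht : t0 < τ)
    (a f : ℕ → ℝ → ℝ) (fn : ℝ → (Fin n → ℝ) → ℝ)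
    (hreg : TriRegular n t0 τ a f fn)
    (α : ℕ → ℝ)
    (hα : ∀ l, 2 ≤ l → l ≤ n →
      Filter.Tendsto (a l) (nhdsWithin t0 (Set.Ioi t0)) (nhds (α l)) ∧ α l ≠ 0)
    (hfnLip : ∀ ρ > (0:ℝ), ∃ L : ℝ, ∀ t ∈ Set.Icc t0 τ, ∀ z1 z2 : Fin n → ℝ,
      ‖z1‖ ≤ ρ → ‖z2‖ ≤ ρ → |fn t z1 - fn t z2| ≤ L * ‖z1 - z2‖)
    (Φ : ℝ → Matrix (Fin n) (Fin n) ℝ) (hΦ : IsFundamental n t0 τ (triA n a) Φ)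
    (hΦinv : ∀ t ∈ Set.Icc t0 τ, IsUnit (Φ t)) :
    ∀ ℓ ∈ Set.Ioo (0:ℝ) 1, ∀ R > (0:ℝ), ∀ θ > (0:ℝ),
      ∃ τ' ∈ Set.Ioc t0 (min (t0 + θ) τ),
        (∀ t ∈ Set.Ioc t0 τ', IsUnit (Psi n 1 t0 (fun _ => triC n) Φ t)) ∧
        ∀ d1 d2 : ℝ → (Fin n → ℝ),
          ContinuousOn d1 (Set.Icc t0 τ') → ContinuousOn d2 (Set.Icc t0 τ') →
          supN n t0 τ' d1 ≤ R → supN n t0 τ' d2 ≤ R →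
          (⨆ t : Set.Ioc t0 τ',
            ‖(Psi n 1 t0 (fun _ => triC n) Φ (t : ℝ))⁻¹.mulVec
              (Xi n 1 t0 (fun _ => triC n) Φ (triG n f fn) d1 (t : ℝ)
                - Xi n 1 t0 (fun _ => triC n) Φ (triG n f fn) d2 (t : ℝ))‖)
            ≤ ℓ * supN n t0 τ' (fun s => d1 s - d2 s) := by
  obtain ⟨m, rfl⟩ : ∃ m, n = m + 1 := ⟨n - 1, by omega⟩
  intro ℓ hℓ R hR θ hθ
  obtain ⟨K, hK⟩ := hfnLip R hR
  have ⟨ham, _, _, _, hfnm, hfnc⟩ := hreg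
  exact stmt16_general ht hΦ
    (fun l h2 hl => ⟨univ, univ_mem, (ham l h2 hl).aestronglyMeasurable⟩) hα
    (fun _ h1 hl => hreg.intervalIntegrable ht.le h1 hl) hfnm
    (fun t ht' => hfnc t (Ioc_subset_Icc_self ht'))
    (fun t ht' => hK t (Ioc_subset_Icc_self ht')) hℓ.1 hθ
end
end
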